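/- arXiv:2411.00679 — 2 statements merged into one kernel-verified Lean document; each statement's English description precedes it below -/
import Mathlib

section
/- Fix an integer k ≥ 416. Let G be a finite simple graph, L a 10-assignment for G, and α, β two L-colorings of G. Suppose G contains five distinct vertices a, b, c, d, e with ab, bc, cd, de, ac, bd edges of G, d_G(a) = d_G(e) = 5, and d_G(b) = d_G(c) = d_G(d) = 6. Let S = {a, b, c, d, e}. If there exists a k-good recoloring sequence in G − S from the restriction of α to G − S to the restriction of β to G − S, then there exists a k-good recoloring sequence in G from α to β. -/
def IsLColoring {V : Type} (G : SimpleGraph V) (L : V → Finset ℕ) (φ : V → ℕ) : Prop :=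
  (∀ v, φ v ∈ L v) ∧ ∀ ⦃u w : V⦄, G.Adj u w → φ u ≠ φ w

def recolorCount {V : Type} {m : ℕ} (φ : Fin (m + 1) → V → ℕ) (v : V) : ℕ :=
  (Finset.univ.filter fun i : Fin m => φ i.castSucc v ≠ φ i.succ v).card

def IsRecolSeq {V : Type} (G : SimpleGraph V) (L : V → Finset ℕ) {m : ℕ}
    (φ : Fin (m + 1) → V → ℕ) (α β : V → ℕ) : Prop :=
  φ 0 = α ∧ φ (Fin.last m) = β ∧ (∀ i, IsLColoring G L (φ i)) ∧
    ∀ i : Fin m, ∃! v : V, φ i.castSucc v ≠ φ i.succ v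

/-! ### Reachability with recoloring budgets -/

/-- `Reach G L γ δ n`: there is a recoloring sequence from `γ` to `δ` recoloring every `v` at
most `n v` times. -/
inductive Reach {V : Type} [DecidableEq V] (G : SimpleGraph V) (L : V → Finset ℕ) :
    (V → ℕ) → (V → ℕ) → (V → ℕ) → Prop
  | refl (γ n : V → ℕ) : IsLColoring G L γ → Reach G L γ γ n
  | step (γ δ n n' : V → ℕ) (v : V) (x : ℕ) : IsLColoring G L γ →
      Reach G L (Function.update γ v x) δ n →
      (∀ u, n u + (if u = v then 1 else 0) ≤ n' u) → Reach G L γ δ n'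

section Core

variable {V : Type} [DecidableEq V] {G : SimpleGraph V} {L : V → Finset ℕ}

theorem Reach.left_col {γ δ n : V → ℕ} (h : Reach G L γ δ n) : IsLColoring G L γ := by
  cases h <;> assumption

theorem Reach.mono {γ δ n m : V → ℕ} (h : Reach G L γ δ n) (hm : ∀ u, n u ≤ m u) :
    Reach G L γ δ m := by
  cases h with
  | refl _ _ h => exact Reach.refl _ _ h
  | step _ _ n0 _ v x hc hr hn => exact Reach.step _ _ n0 _ v x hc hr fun u => (hn u).trans (hm u)

theorem Reach.trans {γ δ ε n m : V → ℕ} (h : Reach G L γ δ n) (h' : Reach G L δ ε m) :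
    Reach G L γ ε (n + m) := by
  induction h with
  | refl γ n h => exact h'.mono fun u => Nat.le_add_left _ _
  | step γ δ n n' v x hc hr hn ih =>
    refine Reach.step _ _ (n + m) _ v x hc (ih h') fun u => ?_
    have := hn u
    simp only [Pi.add_apply]
    omega

theorem Reach.toSeq {γ δ n : V → ℕ} (h : Reach G L γ δ n) :
    ∃ (M : ℕ) (ψ : Fin (M + 1) → V → ℕ),
      IsRecolSeq G L ψ γ δ ∧ ∀ u : V, recolorCount ψ u ≤ n u := by
  induction h with
  | refl γ n h =>
    refine ⟨0, fun _ => γ, ⟨rfl, rfl, fun _ => h, fun i => i.elim0⟩, fun u => ?_⟩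
    simp [recolorCount]
  | step γ δ n n' v x hc hr hn ih =>
    obtain ⟨M, ψ, ⟨h0, h1, h2, h3⟩, h4⟩ := ih
    by_cases hx : γ v = x
    · have : Function.update γ v x = γ := by rw [← hx]; simp
      rw [this] at h0
      refine ⟨M, ψ, ⟨h0, h1, h2, h3⟩, fun u => ?_⟩
      have := hn u
      have := h4 u
      omega
    · refine ⟨M + 1, Fin.cons γ ψ, ⟨rfl, ?_, ?_, ?_⟩, ?_⟩
      · rw [← Fin.succ_last, Fin.cons_succ, h1]
      · intro i
        refine Fin.cases ?_ (fun i => ?_) i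
        · simpa using hc
        · simpa using h2 i
      · intro i
        refine Fin.cases ?_ (fun i => ?_) i
        · refine ⟨v, ?_, ?_⟩
          · simpa [h0] using hx
          · intro u hu
            by_contra hne
            simp [h0, hne] at hu
        · simpa [← Fin.succ_castSucc] using h3 i
      · intro u
        have h5 := hn u
        have h6 := h4 u
        have : recolorCount (Fin.cons γ ψ : Fin (M + 1 + 1) → V → ℕ) u =
            (if γ u ≠ ψ 0 u then 1 else 0) + recolorCount ψ u := by
          unfold recolorCount
          rw [Fin.card_filter_univ_succ]
          simp only [← Fin.succ_castSucc, Fin.cons_succ, Fin.castSucc_zero, Fin.cons_zero]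
          split_ifs <;> simp <;> omega
        rw [this, h0]
        by_cases huv : u = v
        · subst huv
          simp only [if_true] at h5
          split_ifs <;> omega
        · simp [huv] at h5 ⊢
          omega

/-! ### Scripts -/

/-- number of moves of `v` in a script -/
def cnt (v : V) (F : List (V × ℕ)) : ℕ := (F.map Prod.fst).count v

/-- result of executing a script -/
def exec (γ : V → ℕ) : List (V × ℕ) → V → ℕ
  | [] => γ
  | p :: F => exec (Function.update γ p.1 p.2) F

/-- `u` is not in `S`, or still has a scripted move. -/
def Act (S : Set V) (F : List (V × ℕ)) (u : V) : Prop := u ∉ S ∨ cnt u F ≠ 0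

/-- every scripted move respects the list and all active neighbors -/
def Valid (G : SimpleGraph V) (L : V → Finset ℕ) (S : Set V) :
    (V → ℕ) → List (V × ℕ) → Prop
  | _, [] => True
  | γ, p :: F => p.2 ∈ L p.1 ∧ (∀ u, G.Adj p.1 u → Act S F u → γ u ≠ p.2) ∧
      Valid G L S (Function.update γ p.1 p.2) F

theorem cnt_cons (v : V) (p : V × ℕ) (F : List (V × ℕ)) :
    cnt v (p :: F) = cnt v F + if p.1 = v then 1 else 0 := by
  simp [cnt, List.count_cons]

@[simp] theorem cnt_nil (v : V) : cnt v [] = 0 := rfl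

theorem cnt_append (v : V) (F F' : List (V × ℕ)) : cnt v (F ++ F') = cnt v F + cnt v F' := by
  simp [cnt]

theorem Act.cons {S : Set V} {F : List (V × ℕ)} {u : V} (p : V × ℕ) (h : Act S F u) :
    Act S (p :: F) u := by
  rcases h with h | h
  · exact Or.inl h
  · right; rw [cnt_cons]; omega

theorem exec_congr (F : List (V × ℕ)) : ∀ (γ γ' : V → ℕ) (w : V), γ w = γ' w →
    exec γ F w = exec γ' F w := by
  induction F with
  | nil => intro γ γ' w h; exact h
  | cons p F ih =>
    intro γ γ' w h
    refine ih _ _ _ ?_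
    by_cases hw : w = p.1
    · subst hw; simp
    · simp [hw, h]

theorem exec_filter (v : V) (F : List (V × ℕ)) : ∀ (γ : V → ℕ) (w : V), w ≠ v →
    exec γ (F.filter fun p => p.1 ≠ v) w = exec γ F w := by
  induction F with
  | nil => intro γ w h; rfl
  | cons p F ih =>
    intro γ w h
    by_cases hp : p.1 = v
    · rw [List.filter_cons_of_neg (by simpa using hp), ih _ _ h]
      refine exec_congr F _ _ _ ?_
      rw [Function.update_of_ne]
      rw [hp]; exact h
    · rw [List.filter_cons_of_pos (by simpa using hp)]
      exact ih _ _ h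

theorem Valid.congr {S : Set V} (F : List (V × ℕ)) : ∀ (γ γ' : V → ℕ),
    (∀ u, Act S F u → γ u = γ' u) → Valid G L S γ F → Valid G L S γ' F := by
  induction F with
  | nil => intro γ γ' _ _; trivial
  | cons p F ih =>
    intro γ γ' h hv
    refine ⟨hv.1, fun u hu ha => ?_, ih _ _ (fun u hu => ?_) hv.2.2⟩
    · rw [← h u (ha.cons p)]; exact hv.2.1 u hu ha
    · by_cases hw : u = p.1
      · subst hw; simp
      · simp [hw, h u (hu.cons p)]

theorem toScript (S : Set V) : ∀ (m : ℕ) (φ : Fin (m + 1) → ↥(Sᶜ) → ℕ) (γ : V → ℕ),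
    (∀ u : ↥(Sᶜ), γ u = φ 0 u) →
    (∀ i, IsLColoring (G.induce Sᶜ) (fun u => L u.1) (φ i)) →
    (∀ i : Fin m, ∃! v, φ i.castSucc v ≠ φ i.succ v) →
    ∃ F : List (V × ℕ), Valid G L S γ F ∧ (∀ v ∈ S, cnt v F = 0) ∧
      (∀ u : ↥(Sᶜ), exec γ F u = φ (Fin.last m) u) ∧
      ∀ u : ↥(Sᶜ), cnt (u : V) F ≤ recolorCount φ u := by
  intro m
  induction m with
  | zero =>
    intro φ γ h0 h1 h2
    refine ⟨[], trivial, by simp, fun u => ?_, by simp⟩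
    exact h0 u
  | succ m ih =>
    intro φ γ h0 h1 h2
    obtain ⟨w, hw, hw'⟩ := h2 0
    simp only [Fin.castSucc_zero] at hw hw'
    have hupd : ∀ u : ↥(Sᶜ), Function.update γ (w : V) (φ (Fin.succ 0) w) u = φ (Fin.succ 0) u := by
      intro u
      by_cases huw : u = w
      · subst huw; simp
      · have : (u : V) ≠ w := fun h => huw (Subtype.ext h)
        rw [Function.update_of_ne this, h0 u]
        by_contra hne
        exact huw (hw' u hne)
    obtain ⟨F, hF1, hF2, hF3, hF4⟩ := ih (fun i => φ i.succ)
      (Function.update γ (w : V) (φ (Fin.succ 0) w)) hupd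
      (fun i => h1 i.succ) (fun i => by simpa [← Fin.succ_castSucc] using h2 i.succ)
    refine ⟨((w : V), φ (Fin.succ 0) w) :: F, ⟨?_, ?_, hF1⟩, ?_, ?_, ?_⟩
    · exact (h1 (Fin.succ 0)).1 w
    · intro u hu ha
      have huS : u ∉ S := by
        rcases ha with h | h
        · exact h
        · intro hs; exact h (hF2 u hs)
      have huw : u ≠ w := fun h => by subst h; exact G.loopless.irrefl _ hu
      have h3 := hupd ⟨u, huS⟩
      simp only [] at h3
      rw [Function.update_of_ne huw] at h3
      simp only []
      rw [h3]
      have := (h1 (Fin.succ 0)).2 (u := w) (w := ⟨u, huS⟩) (by simpa using hu)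
      exact this.symm
    · intro v hv
      rw [cnt_cons, hF2 v hv, if_neg]
      intro h
      exact w.2 (by rw [show (w : V) = v from h]; exact hv)
    · intro u
      exact hF3 u
    · intro u
      have h5 := hF4 u
      have : recolorCount φ u =
            (if φ 0 u ≠ φ (Fin.succ 0) u then 1 else 0) + recolorCount (fun i : Fin (m+1) => φ i.succ) u := by
          unfold recolorCount
          rw [Fin.card_filter_univ_succ]
          simp only [← Fin.succ_castSucc, Fin.castSucc_zero]
          split_ifs <;> simp <;> omega
      rw [this, cnt_cons]
      by_cases huw : u = w
      · subst huw
        rw [if_pos rfl, if_pos hw]; omega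
      · have : ¬ (w : V) = u := fun h => huw (Subtype.ext h.symm)
        simp only [this, if_false]
        omega

end Core

section Core2

variable {V : Type} [DecidableEq V] {G : SimpleGraph V} [DecidableRel G.Adj] {L : V → Finset ℕ}

/-- colors of the scripted moves at neighbors of `v` -/
def ev (G : SimpleGraph V) [DecidableRel G.Adj] (v : V) : List (V × ℕ) → List ℕ
  | [] => []
  | p :: F => if G.Adj v p.1 then p.2 :: ev G v F else ev G v F

theorem ev_cons_adj {v : V} {p : V × ℕ} {F : List (V × ℕ)} (h : G.Adj v p.1) :
    ev G v (p :: F) = p.2 :: ev G v F := by simp [ev, h]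

theorem ev_cons_not {v : V} {p : V × ℕ} {F : List (V × ℕ)} (h : ¬ G.Adj v p.1) :
    ev G v (p :: F) = ev G v F := by simp [ev, h]

theorem ev_length [Fintype V] (v : V) (F : List (V × ℕ)) :
    (ev G v F).length = ∑ u ∈ G.neighborFinset v, cnt u F := by
  induction F with
  | nil => simp [ev]
  | cons p F ih =>
    simp only [cnt_cons, Finset.sum_add_distrib, ← ih]
    by_cases h : G.Adj v p.1
    · simp [ev_cons_adj h, h]
    · simp [ev_cons_not h, h]

theorem ev_length_insert (v w : V) (F : List (V × ℕ)) :
    (ev G v F).length ≤ (ev G v (F.filter fun p => p.1 ≠ w)).length + cnt w F := by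
  induction F with
  | nil => simp [ev]
  | cons p F ih =>
    rw [cnt_cons]
    by_cases hp : p.1 = w
    · rw [List.filter_cons_of_neg (by simpa using hp)]
      by_cases h : G.Adj v p.1
      · simp only [ev_cons_adj h, hp, if_true, List.length_cons]; omega
      · simp only [ev_cons_not h, hp, if_true]; omega
    · rw [List.filter_cons_of_pos (by simpa using hp)]
      by_cases h : G.Adj v p.1
      · simp only [ev_cons_adj h, hp, if_false, List.length_cons]; omega
      · simp only [ev_cons_not h, hp, if_false]; omega

theorem cnt_filter (v u : V) (F : List (V × ℕ)) (h : u ≠ v) :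
    cnt u (F.filter fun p => p.1 ≠ v) = cnt u F := by
  induction F with
  | nil => rfl
  | cons p F ih =>
    by_cases hp : p.1 = v
    · have hpu : ¬ p.1 = u := fun h' => h (h'.symm.trans hp)
      rw [List.filter_cons_of_neg (by simpa using hp), cnt_cons, ih, if_neg hpu]
      rfl
    · rw [List.filter_cons_of_pos (by simpa using hp), cnt_cons, cnt_cons, ih]

theorem choose_color (C : Finset ℕ) (hC : C.card = 10) (A : Finset ℕ) (l : List ℕ) (t : ℕ)
    (h : A.card + t ≤ 9) : ∃ y ∈ C, y ∉ A ∧ y ∉ l.take t := by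
  have h1 : (A ∪ (l.take t).toFinset).card < C.card := by
    have h2 := Finset.card_union_le A (l.take t).toFinset
    have h3 := List.toFinset_card_le (l.take t)
    have h4 := List.length_take_le t l
    omega
  obtain ⟨y, hy, hyy⟩ := Finset.exists_mem_notMem_of_card_lt_card h1
  simp only [Finset.mem_union, List.mem_toFinset, not_or] at hyy
  exact ⟨y, hy, hyy.1, hyy.2⟩

/-- Inserting planned moves of `v`, ignoring the inactive vertices. -/
theorem plan (S : Set V) (v : V) (hLv : (L v).card = 10) (N : Finset V)
    (hN4 : N.card ≤ 4) : ∀ (F : List (V × ℕ)) (γ : V → ℕ) (j t : ℕ),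
    (∀ u, G.Adj v u → Act S F u → u ∈ N) →
    Valid G L S γ F → cnt v F = 0 → v ∈ S → γ v ∈ L v →
    (∀ u, G.Adj v u → Act S F u → γ u ≠ γ v) → γ v ∉ (ev G v F).take t →
    ∃ F' F1 F2 : List (V × ℕ), ∃ y : ℕ, Valid G L S γ F' ∧
      (F'.filter fun p => p.1 ≠ v) = F ∧ cnt v F' ≤ j + 1 ∧ F' = F1 ++ (v, y) :: F2 ∧
      cnt v F2 = 0 ∧ (ev G v F2).length ≤ (ev G v F).length - (5 * j + t) := by
  intro F
  induction F with
  | nil =>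
    intro γ j t hN hv hc hvS hL hp ht
    refine ⟨[(v, γ v)], [], [], γ v, ⟨hL, hp, trivial⟩, by simp, by simp [cnt_cons], rfl, rfl, ?_⟩
    simp [ev]
  | cons p F ih =>
    have key : ∀ (γ : V → ℕ) (j t : ℕ), 
      (∀ u, G.Adj v u → Act S (p :: F) u → u ∈ N) →
      Valid G L S γ (p :: F) → cnt v (p :: F) = 0 → v ∈ S → γ v ∈ L v →
      (∀ u, G.Adj v u → Act S (p :: F) u → γ u ≠ γ v) → γ v ∉ (ev G v (p :: F)).take t →
      (G.Adj v p.1 → p.2 ≠ γ v) → 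
      ∃ F' F1 F2 : List (V × ℕ), ∃ y : ℕ, Valid G L S γ F' ∧
      (F'.filter fun p => p.1 ≠ v) = (p :: F) ∧ cnt v F' ≤ j + 1 ∧ F' = F1 ++ (v, y) :: F2 ∧
      cnt v F2 = 0 ∧ (ev G v F2).length ≤ (ev G v (p :: F)).length - (5 * j + t) := by
      intro γ j t hN hv hc hvS hL hp ht hne
      rw [cnt_cons] at hc
      have hpv : p.1 ≠ v := by
        intro h; simp [h] at hc
      have hc' : cnt v F = 0 := by omega
      have hvp : v ≠ p.1 := hpv.symm
      have hprop : ∀ u, G.Adj v u → Act S F u →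
          Function.update γ p.1 p.2 u ≠ Function.update γ p.1 p.2 v := by
        intro u hu ha
        rw [Function.update_of_ne hvp]
        by_cases hup : u = p.1
        · subst hup
          simpa using hne hu
        · rw [Function.update_of_ne hup]
          exact hp u hu (ha.cons p)
      have ht' : Function.update γ p.1 p.2 v ∉
          (ev G v F).take (if G.Adj v p.1 then t - 1 else t) := by
        rw [Function.update_of_ne hvp]
        by_cases ha : G.Adj v p.1
        · rw [ev_cons_adj ha] at ht
          simp only [ha, if_true]
          cases t with
          | zero => simp
          | succ t =>
            simp only [List.take_succ_cons, List.mem_cons, not_or] at ht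
            simpa using ht.2
        · rw [ev_cons_not ha] at ht
          simpa [ha] using ht
      obtain ⟨F', F1, F2, y, h1, h2, h3, h4, h5, h6⟩ := ih (Function.update γ p.1 p.2) j _
        (fun u hu ha => hN u hu (ha.cons p)) hv.2.2 hc' hvS
        (by rw [Function.update_of_ne hvp]; exact hL) hprop ht'
      refine ⟨p :: F', p :: F1, F2, y, ⟨hv.1, ?_, h1⟩, ?_, ?_, by rw [h4]; rfl, h5, ?_⟩
      · intro u hu ha
        by_cases huv : u = v
        · subst huv; exact (hne hu.symm).symm
        · refine hv.2.1 u hu ?_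
          rcases ha with ha | ha
          · exact Or.inl ha
          · right; rw [← h2, cnt_filter v u F' huv]; exact ha
      · rw [List.filter_cons_of_pos (by simpa using hpv), h2]
      · rw [cnt_cons, if_neg hpv]; exact h3
      · by_cases ha : G.Adj v p.1
        · rw [ev_cons_adj ha, List.length_cons]
          simp only [ha, if_true] at h6
          omega
        · rw [ev_cons_not ha]
          simpa only [ha, if_false] using h6
    intro γ j t hN hv hc hvS hL hp ht
    by_cases hne : G.Adj v p.1 → p.2 ≠ γ v
    · exact key γ j t hN hv hc hvS hL hp ht hne
    · simp only [ne_eq, Classical.not_imp, not_not] at hne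
      obtain ⟨hadj, hhit⟩ := hne
      have ht0 : t = 0 := by
        cases t with
        | zero => rfl
        | succ t =>
          rw [ev_cons_adj hadj] at ht
          simp [hhit] at ht
      subst ht0
      cases j with
      | zero =>
        refine ⟨(v, γ v) :: p :: F, [], p :: F, γ v, ⟨hL, hp, by simpa using hv⟩, ?_, ?_, rfl, hc, ?_⟩
        · rw [List.filter_cons_of_neg (by simp), List.filter_eq_self]
          intro q hq
          have : v ∉ (p :: F).map Prod.fst := List.count_eq_zero.1 hc
          simp only [ne_eq, decide_eq_true_eq]
          rintro rfl
          exact this (List.mem_map_of_mem hq)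
        · rw [cnt_cons, hc]; simp
        · omega
      | succ j =>
        have hcard : (N.image γ).card + 5 ≤ 9 := by
          have : (N.image γ).card ≤ N.card := Finset.card_image_le
          omega
        obtain ⟨z, hz, hz1, hz2⟩ := choose_color (L v) hLv _ (ev G v (p :: F)) 5 hcard
        have hz3 : ∀ u, G.Adj v u → Act S (p :: F) u → γ u ≠ z := by
          intro u hu ha h
          exact hz1 (Finset.mem_image.2 ⟨u, hN u hu ha, h⟩)
        have hva : ∀ u, Act S (p :: F) u → u ≠ v := by
          rintro u (ha | ha) rfl
          · exact ha hvS
          · exact ha hc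
        obtain ⟨F', F1, F2, y, h1, h2, h3, h4, h5, h6⟩ := key (Function.update γ v z) j 5 hN
          (hv.congr _ _ _ (fun u hu => by rw [Function.update_of_ne (hva u hu)])) hc hvS
          (by simpa using hz)
          (fun u hu ha => by
            rw [Function.update_of_ne (hva u ha), Function.update_self]; exact hz3 u hu ha)
          (by simpa using hz2)
          (by
            intro _ h
            rw [Function.update_self] at h
            apply hz2
            rw [ev_cons_adj hadj, ← h]; simp)
        refine ⟨(v, z) :: F', (v, z) :: F1, F2, y, ⟨hz, ?_, h1⟩, ?_, ?_, by rw [h4]; rfl, h5, ?_⟩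
        · intro u hu ha
          have huv : u ≠ v := hu.ne'
          refine hz3 u hu ?_
          rcases ha with ha | ha
          · exact Or.inl ha
          · right; rw [← h2, cnt_filter v u F' huv]; exact ha
        · rw [List.filter_cons_of_neg (by simp), h2]
        · rw [cnt_cons]; simp; omega
        · omega

/-! ### Final phase -/

theorem update_col {γ : V → ℕ} {v : V} {y : ℕ} (h : IsLColoring G L γ) (hy : y ∈ L v)
    (hn : ∀ u, G.Adj v u → γ u ≠ y) : IsLColoring G L (Function.update γ v y) := by
  constructor
  · intro u
    by_cases hu : u = v
    · subst hu; simpa using hy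
    · simpa [hu] using h.1 u
  · intro u w huw
    by_cases hu : u = v
    · subst hu
      have : w ≠ u := huw.ne'
      simp only [Function.update_self, Function.update_of_ne this]
      exact (hn w huw).symm
    · by_cases hw : w = v
      · subst hw
        simp only [Function.update_self, Function.update_of_ne hu]
        exact hn u huw.symm
      · simp only [Function.update_of_ne hu, Function.update_of_ne hw]
        exact h.2 huw

theorem pass2 {β : V → ℕ} (hβ : IsLColoring G L β) : ∀ (l : List V) (γ : V → ℕ),
    IsLColoring G L γ → l.Nodup → (∀ u, u ∉ l → γ u = β u) →
    l.Pairwise (fun u v => G.Adj u v → γ v ≠ β u) →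
    Reach G L γ β (fun u => l.count u) := by
  intro l
  induction l with
  | nil =>
    intro γ hγ _ h _
    have : γ = β := funext fun u => h u (by simp)
    subst this
    exact Reach.refl _ _ hγ
  | cons v l ih =>
    intro γ hγ hnd h hp
    rw [List.pairwise_cons] at hp
    rw [List.nodup_cons] at hnd
    refine Reach.step _ _ (fun u => l.count u) _ v (β v) hγ (ih _ ?_ hnd.2 ?_ ?_) ?_
    · refine update_col hγ (hβ.1 v) fun u hu => ?_
      by_cases hul : u ∈ l
      · exact hp.1 u hul hu
      · rw [h u (by simp [hul, hu.ne'])]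
        exact (hβ.2 hu).symm
    · intro u hu
      by_cases huv : u = v
      · subst huv; simp
      · rw [Function.update_of_ne huv]; exact h u (by simp [huv, hu])
    · refine hp.2.imp_of_mem ?_
      intro x y hx hy hxy ha
      have : y ≠ v := by rintro rfl; exact hnd.1 hy
      rw [Function.update_of_ne this]; exact hxy ha
    · intro u
      by_cases huv : u = v
      · subst huv; simp
      · have : ¬ v = u := fun h => huv h.symm
        simp [List.count_cons, huv, this]

theorem pass1 [Fintype V] (hL : ∀ u, (L u).card = 10) (β : V → ℕ) : ∀ (l done : List V) (γ : V → ℕ),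
    IsLColoring G L γ → (done ++ l).Nodup →
    (∀ l1 v l2, l = l1 ++ v :: l2 → G.degree v + done.length + l1.length ≤ 9) →
    ∃ γ', Reach G L γ γ' (fun u => l.count u) ∧ IsLColoring G L γ' ∧
      (∀ u, u ∉ l → γ' u = γ u) ∧
      (∀ u ∈ done, ∀ v ∈ l, G.Adj u v → γ' v ≠ β u) ∧
      l.Pairwise (fun u v => G.Adj u v → γ' v ≠ β u) := by
  intro l
  induction l with
  | nil =>
    intro done γ hγ _ _
    exact ⟨γ, Reach.refl _ _ hγ, hγ, by simp, by simp, by simp⟩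
  | cons v l ih =>
    intro done γ hγ hnd hd
    have hcard : ((G.neighborFinset v).image γ ∪ (done.map β).toFinset).card ≤ 9 := by
      have h1 := hd [] v l rfl
      have h2 := Finset.card_union_le ((G.neighborFinset v).image γ) (done.map β).toFinset
      have h3 : ((G.neighborFinset v).image γ).card ≤ G.degree v := Finset.card_image_le
      have h4 := List.toFinset_card_le (done.map β)
      simp at h4 h1
      omega
    obtain ⟨y, hy, hy1, -⟩ := choose_color (L v) (hL v) _ [] 0 hcard
    simp only [Finset.mem_union, Finset.mem_image, SimpleGraph.mem_neighborFinset,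
      List.mem_toFinset, List.mem_map, not_or, not_exists, not_and] at hy1
    have hγ' := update_col hγ hy hy1.1
    have hnd' : (done ++ [v] ++ l).Nodup := by simpa using hnd
    obtain ⟨γ', h1, h2, h3, h4, h5⟩ := ih (done ++ [v]) _ hγ' hnd' (by
      intro l1 u l2 h
      have := hd (v :: l1) u l2 (by simp [h])
      simp at this ⊢
      omega)
    have hvl : v ∉ l := by
      intro h
      have := List.nodup_append.1 hnd'
      exact this.2.2 v (by simp) v h rfl
    have hv : γ' v = y := by rw [h3 v hvl]; simp
    refine ⟨γ', ?_, h2, ?_, ?_, ?_⟩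
    · refine Reach.step _ _ _ _ v y hγ h1 fun u => ?_
      by_cases huv : u = v
      · subst huv; simp
      · have : ¬ v = u := fun h => huv h.symm
        simp [List.count_cons, huv, this]
    · intro u hu
      simp only [List.mem_cons, not_or] at hu
      rw [h3 u hu.2, Function.update_of_ne hu.1]
    · intro u hu w hw ha
      rcases List.mem_cons.1 hw with rfl | hw
      · rw [hv]; intro h; exact hy1.2 u hu h.symm
      · exact h4 u (by simp [hu]) w hw ha
    · rw [List.pairwise_cons]
      exact ⟨fun w hw ha => h4 v (by simp) w hw ha, h5⟩

theorem finalPhase [Fintype V] (hL : ∀ u, (L u).card = 10) {β γ : V → ℕ}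
    (hβ : IsLColoring G L β) (hγ : IsLColoring G L γ) (l : List V) (hl : l.Nodup)
    (hoff : ∀ u, u ∉ l → γ u = β u)
    (hd : ∀ l1 v l2, l = l1 ++ v :: l2 → G.degree v + l1.length ≤ 9) :
    Reach G L γ β (fun u => 2 * l.count u) := by
  obtain ⟨γ', h1, h2, h3, -, h5⟩ := pass1 hL β l [] γ hγ (by simpa using hl) (by simpa using hd)
  have h6 := pass2 hβ l γ' h2 hl (fun u hu => by rw [h3 u hu, hoff u hu]) h5
  refine (h1.trans h6).mono fun u => ?_
  simp only [Pi.add_apply]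
  omega

end Core2

section Online

variable {V : Type} [Fintype V] [DecidableEq V] {G : SimpleGraph V} [DecidableRel G.Adj]
  {L : V → Finset ℕ}

/-- Budget invariant of a vertex without remaining scripted moves. -/
def FInv (G : SimpleGraph V) [DecidableRel G.Adj] (a : V) (γ : V → ℕ) (F : List (V × ℕ))
    (n σ : V → ℕ) (ρ : ℕ) (v : V) : Prop :=
  σ v ≤ n v ∧ ∃ f ≤ 4, γ v ∉ (ev G v F).take f ∧
    (ev G v F).length + (9 - G.degree v) + 5 * (if v = a then ρ else 0) ≤
      (9 - G.degree v) * n v + σ v + f + 1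

/-- Budget invariant of a vertex of `S` with remaining scripted moves. -/
def AInv (G : SimpleGraph V) [DecidableRel G.Adj] (F : List (V × ℕ))
    (n σ : V → ℕ) (v : V) : Prop :=
  σ v = 0 ∧ ∃ F1 F2 : List (V × ℕ), ∃ y r : ℕ, F = F1 ++ (v, y) :: F2 ∧ cnt v F2 = 0 ∧
    cnt v F1 + 1 + r ≤ n v ∧
    (ev G v F2).length + (9 - G.degree v) ≤ (9 - G.degree v) * r + 1

structure RInv (G : SimpleGraph V) [DecidableRel G.Adj] (L : V → Finset ℕ) (S : Set V) (a : V)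
    (γ : V → ℕ) (F : List (V × ℕ)) (n σ : V → ℕ) (ρ : ℕ) : Prop where
  col : IsLColoring G L γ
  val : Valid G L S γ F
  out : ∀ w, w ∉ S → cnt w F ≤ n w
  ain : cnt a F = 0
  sig : ∀ v, σ v ≠ 0 → v ∈ S ∧ G.degree v = 6 ∧ G.Adj v a
  inn : ∀ v ∈ S, (cnt v F = 0 ∧ FInv G a γ F n σ ρ v) ∨ AInv G F n σ v

theorem RInv.recolor {S : Set V} {a : V} {γ : V → ℕ} {F : List (V × ℕ)} {n σ : V → ℕ} {ρ : ℕ}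
    (h : RInv G L S a γ F n σ ρ) (v : V) (hv : v ∈ S) (hc : cnt v F = 0) (y : ℕ) (hy : y ∈ L v)
    (hn : ∀ u, G.Adj v u → γ u ≠ y) (m s ρ' : ℕ) (hs : s ≤ σ v) (hρ : ρ' ≤ ρ)
    (hf : FInv G a (Function.update γ v y) F (Function.update n v m) (Function.update σ v s) ρ' v) :
    RInv G L S a (Function.update γ v y) F (Function.update n v m) (Function.update σ v s) ρ' := by
  refine ⟨update_col h.col hy hn, ?_, ?_, h.ain, ?_, ?_⟩
  · refine h.val.congr _ _ _ fun u hu => ?_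
    have : u ≠ v := by
      rintro rfl
      rcases hu with hu | hu
      · exact hu hv
      · exact hu hc
    rw [Function.update_of_ne this]
  · intro w hw
    have : w ≠ v := by rintro rfl; exact hw hv
    rw [Function.update_of_ne this]; exact h.out w hw
  · intro u hu
    apply h.sig
    by_cases huv : u = v
    · subst huv
      rw [Function.update_self] at hu
      omega
    · rwa [Function.update_of_ne huv] at hu
  · intro u hu
    by_cases huv : u = v
    · subst huv; exact Or.inl ⟨hc, hf⟩
    · rcases h.inn u hu with ⟨h0, h1, f, hf4, hf1, hf2⟩ | h1
      · refine Or.inl ⟨h0, ?_⟩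
        simp only [FInv, Function.update_of_ne huv]
        refine ⟨h1, f, hf4, hf1, ?_⟩
        split_ifs at hf2 ⊢ <;> omega
      · right
        simpa only [AInv, Function.update_of_ne huv] using h1

/-- a hit vertex cannot be scripted, and has exhausted its life -/
theorem RInv.hit {S : Set V} {a : V} {γ : V → ℕ} {F : List (V × ℕ)} {n σ : V → ℕ} {ρ : ℕ}
    {p : V × ℕ} (h : RInv G L S a γ (p :: F) n σ ρ) {u : V} (hu : G.Adj p.1 u) (hh : γ u = p.2) :
    u ∈ S ∧ cnt u (p :: F) = 0 ∧ σ u ≤ n u ∧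
    (ev G u F).length + 1 + (9 - G.degree u) + 5 * (if u = a then ρ else 0) ≤
      (9 - G.degree u) * n u + σ u + 1 := by
  have hna : ¬ Act S F u := fun ha => h.val.2.1 u hu ha hh
  have huS : u ∈ S := by
    by_contra hc; exact hna (Or.inl hc)
  have hc : cnt u (p :: F) = 0 := by
    rw [cnt_cons, if_neg hu.ne]
    by_contra hc; exact hna (Or.inr hc)
  refine ⟨huS, hc, ?_⟩
  rcases h.inn u huS with ⟨-, h1, f, hf4, hf1, hf2⟩ | ⟨-, F1, F2, y, r, hF, -⟩
  · rw [ev_cons_adj hu.symm] at hf1 hf2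
    cases f with
    | zero =>
      rw [List.length_cons] at hf2
      exact ⟨h1, by omega⟩
    | succ f => simp [hh] at hf1
  · rw [hF, cnt_append, cnt_cons] at hc
    simp at hc

variable {S : Set V} {a : V}

/-- number of neighbors of the mover which block the move -/
def hits (G : SimpleGraph V) [DecidableRel G.Adj] (γ : V → ℕ) (p : V × ℕ) : ℕ :=
  ((Finset.univ : Finset V).filter fun u => G.Adj p.1 u ∧ γ u = p.2).card

/-- recoloring one blocking vertex without requests -/
theorem RInv.natural (hL : ∀ u, (L u).card = 10) (hdeg : ∀ v ∈ S, G.degree v = 5 ∨ G.degree v = 6)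
    {γ : V → ℕ} {F : List (V × ℕ)} {n σ : V → ℕ} {ρ : ℕ}
    {p : V × ℕ} (h : RInv G L S a γ (p :: F) n σ ρ) {u : V} (hu : G.Adj p.1 u) (hh : γ u = p.2)
    (hσ : σ u = 0) :
    ∃ y m, n u = m + 1 ∧ y ≠ p.2 ∧
      RInv G L S a (Function.update γ u y) (p :: F) (Function.update n u m) σ ρ := by
  obtain ⟨huS, hc, hs, hb⟩ := h.hit hu hh
  have hd := hdeg u huS
  have hcard : ((G.neighborFinset u).image γ).card + (9 - G.degree u) ≤ 9 := by
    have : ((G.neighborFinset u).image γ).card ≤ G.degree u := Finset.card_image_le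
    omega
  obtain ⟨y, hy, hy1, hy2⟩ := choose_color (L u) (hL u) _ (ev G u (p :: F)) (9 - G.degree u) hcard
  have hm : ∃ m, n u = m + 1 := by
    refine ⟨n u - 1, ?_⟩
    rcases hd with hd | hd <;> rw [hd] at hb <;> omega
  obtain ⟨m, hm⟩ := hm
  refine ⟨y, m, hm, ?_, ?_⟩
  · rintro rfl
    apply hy2
    rw [ev_cons_adj hu.symm]
    rcases hd with hd | hd <;> simp [hd]
  · have := h.recolor u huS hc y hy (fun w hw hwy => hy1 (Finset.mem_image.2 ⟨w, by simpa using hw, hwy⟩))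
      m (σ u) ρ le_rfl le_rfl ?_
    · simpa using this
    · refine ⟨by simp [hσ], 9 - G.degree u, by omega, by simpa using hy2, ?_⟩
      rw [ev_cons_adj hu.symm, List.length_cons]
      simp only [Function.update_self]
      rw [hm] at hb
      rcases hd with hd | hd <;> rw [hd] at hb ⊢ <;> omega

/-- request that `a` moves away from its color -/
theorem RInv.request (hL : ∀ u, (L u).card = 10) (ha : a ∈ S) (hda : G.degree a = 5)
    {γ : V → ℕ} {F : List (V × ℕ)} {n σ : V → ℕ} {ρ : ℕ}
    (h : RInv G L S a γ F n σ (ρ + 1)) :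
    ∃ y m, n a = m + 1 ∧ y ≠ γ a ∧ y ∉ (ev G a F).take 3 ∧
      RInv G L S a (Function.update γ a y) F (Function.update n a m) σ ρ := by
  have hσ : σ a = 0 := by
    by_contra hne
    exact (h.sig a hne).2.2.ne rfl
  obtain ⟨-, f, hf4, hf1, hf2⟩ : FInv G a γ F n σ (ρ + 1) a := by
    rcases h.inn a ha with h1 | ⟨-, F1, F2, y, r, hF, -⟩
    · exact h1.2
    · have := h.ain
      rw [hF, cnt_append, cnt_cons] at this
      simp at this
  have hcard : (insert (γ a) ((G.neighborFinset a).image γ)).card + 3 ≤ 9 := by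
    have h1 : ((G.neighborFinset a).image γ).card ≤ G.degree a := Finset.card_image_le
    have h2 := Finset.card_insert_le (γ a) ((G.neighborFinset a).image γ)
    omega
  obtain ⟨y, hy, hy1, hy2⟩ := choose_color (L a) (hL a) _ (ev G a F) 3 hcard
  simp only [Finset.mem_insert, not_or] at hy1
  rw [hda, if_pos rfl, hσ] at hf2
  obtain ⟨m, hm⟩ : ∃ m, n a = m + 1 := ⟨n a - 1, by omega⟩
  refine ⟨y, m, hm, hy1.1, hy2, ?_⟩
  have := h.recolor a ha h.ain y hy
    (fun w hw hwy => hy1.2 (Finset.mem_image.2 ⟨w, by simpa using hw, hwy⟩))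
    m (σ a) ρ le_rfl (by omega) ?_
  · simpa using this
  · refine ⟨by simp [hσ], 3, by omega, by simpa using hy2, ?_⟩
    simp only [Function.update_self, if_true, hda, hσ]
    omega

/-- one blocking vertex is removed -/
theorem RInv.unblock (hL : ∀ u, (L u).card = 10) (hdeg : ∀ v ∈ S, G.degree v = 5 ∨ G.degree v = 6)
    (ha : a ∈ S) (hda : G.degree a = 5)
    {γ : V → ℕ} {F : List (V × ℕ)} {n σ : V → ℕ} {ρ : ℕ} (hρ : ∑ v, σ v ≤ ρ)
    {p : V × ℕ} (h : RInv G L S a γ (p :: F) n σ ρ) {u : V} (hu : G.Adj p.1 u) (hh : γ u = p.2) :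
    ∃ γ' n' σ' ρ', ∑ v, σ' v ≤ ρ' ∧ RInv G L S a γ' (p :: F) n' σ' ρ' ∧
      hits G γ' p < hits G γ p ∧ (∀ w, w ∉ S → γ' w = γ w) ∧
      ∀ δ, Reach G L γ' δ n' → Reach G L γ δ n := by
  have huS := (h.hit hu hh).1
  have hlt : ∀ γ' : V → ℕ, γ' u ≠ p.2 → (∀ w, G.Adj p.1 w → γ' w = p.2 → γ w = p.2) →
      hits G γ' p < hits G γ p := by
    intro γ' h1 h2
    apply Finset.card_lt_card
    rw [Finset.ssubset_iff_of_subset]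
    · exact ⟨u, by simp [hu, hh], by simp [h1]⟩
    · intro w hw
      simp only [Finset.mem_filter, Finset.mem_univ, true_and] at hw ⊢
      exact ⟨hw.1, h2 w hw.1 hw.2⟩
  have hstep : ∀ (γ n : V → ℕ) (v : V) (y m : ℕ), n v = m + 1 → IsLColoring G L γ → 
      ∀ δ, Reach G L (Function.update γ v y) δ (Function.update n v m) → Reach G L γ δ n := by
    intro γ n v y m hm hc δ hr
    refine Reach.step _ _ _ _ v y hc hr fun w => ?_
    by_cases hw : w = v
    · subst hw; simp [hm]
    · simp [hw]
  by_cases hσ : σ u = 0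
  · obtain ⟨y, m, hm, hy, hI⟩ := h.natural hL hdeg hu hh hσ
    refine ⟨_, _, σ, ρ, hρ, hI, hlt _ (by simpa using hy) ?_, ?_, hstep _ _ _ _ _ hm h.col⟩
    · intro w hw hw'
      by_cases hwu : w = u
      · subst hwu; exact hh
      · rwa [Function.update_of_ne hwu] at hw'
    · intro w hw
      have : w ≠ u := by rintro rfl; exact hw huS
      rw [Function.update_of_ne this]
  · obtain ⟨-, hd6, hua⟩ := h.sig u hσ
    have hune : u ≠ a := hua.ne
    have hcard : (((G.neighborFinset u).erase a).image γ).card + 4 ≤ 9 := by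
      have h1 : (((G.neighborFinset u).erase a).image γ).card ≤ ((G.neighborFinset u).erase a).card :=
        Finset.card_image_le
      rw [Finset.card_erase_of_mem (by simpa using hua), SimpleGraph.card_neighborFinset_eq_degree] at h1
      omega
    obtain ⟨y, hy, hy1, hy2⟩ := choose_color (L u) (hL u) _ (ev G u (p :: F)) 4 hcard
    have hyp : y ≠ p.2 := by
      rintro rfl
      apply hy2
      rw [ev_cons_adj hu.symm]; simp
    have hy3 : ∀ w, G.Adj u w → w ≠ a → γ w ≠ y := by
      intro w hw hwa hwy
      exact hy1 (Finset.mem_image.2 ⟨w, by simp [hw, hwa], hwy⟩)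
    -- sums
    have hsum : ∑ v, Function.update σ u (σ u - 1) v + 1 ≤ ∑ v, σ v := by
      rw [Finset.sum_update_of_mem (Finset.mem_univ u),
        ← Finset.add_sum_erase Finset.univ σ (Finset.mem_univ u), Finset.sdiff_singleton_eq_erase]
      omega
    obtain ⟨ρ0, rfl⟩ : ∃ ρ0, ρ = ρ0 + 1 := ⟨ρ - 1, by omega⟩
    -- generic final recoloring of `u`
    have fin : ∀ (γ1 n1 : V → ℕ), RInv G L S a γ1 (p :: F) n1 σ ρ0 → γ1 u = p.2 →
        (∀ w, G.Adj u w → γ1 w ≠ y) → ∃ m, n1 u = m + 1 ∧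
        RInv G L S a (Function.update γ1 u y) (p :: F) (Function.update n1 u m)
          (Function.update σ u (σ u - 1)) ρ0 := by
      intro γ1 n1 h1 hh1 hw1
      obtain ⟨-, hc, hs, hb⟩ := h1.hit hu hh1
      obtain ⟨m, hm⟩ : ∃ m, n1 u = m + 1 := ⟨n1 u - 1, by omega⟩
      refine ⟨m, hm, h1.recolor u huS hc y hy hw1 m (σ u - 1) ρ0 (by omega) le_rfl ?_⟩
      refine ⟨by simp; omega, 4, le_rfl, by simpa using hy2, ?_⟩
      rw [ev_cons_adj hu.symm, List.length_cons]
      simp only [Function.update_self]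
      rw [hm, hd6] at hb
      rw [hd6]
      omega
    by_cases hya : γ a = y
    · obtain ⟨z, m, hm, hz, hz3, hI⟩ := h.request hL ha hda
      obtain ⟨m', hm', hI'⟩ := fin _ _ hI (by rw [Function.update_of_ne hune]; exact hh) (by
        intro w hw
        by_cases hwa : w = a
        · subst hwa; rw [Function.update_self, ← hya]; exact hz
        · rw [Function.update_of_ne hwa]; exact hy3 w hw hwa)
      refine ⟨_, _, _, ρ0, by omega, hI', hlt _ (by simpa using hyp) ?_, ?_, ?_⟩
      · intro w hw hw'
        by_cases hwu : w = u
        · subst hwu; exact hh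
        · rw [Function.update_of_ne hwu] at hw'
          by_cases hwa : w = a
          · subst hwa
            rw [Function.update_self] at hw'
            exfalso
            apply hz3
            rw [ev_cons_adj hw.symm, hw']; simp
          · rwa [Function.update_of_ne hwa] at hw'
      · intro w hw
        have h1 : w ≠ u := by rintro rfl; exact hw huS
        have h2 : w ≠ a := by rintro rfl; exact hw ha
        rw [Function.update_of_ne h1, Function.update_of_ne h2]
      · intro δ hδ
        exact hstep _ _ _ _ _ hm h.col _ (hstep _ _ _ _ _ hm' hI.col _ hδ)
    · have hI : RInv G L S a γ (p :: F) n σ ρ0 := by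
        refine ⟨h.col, h.val, h.out, h.ain, h.sig, fun v hv => ?_⟩
        rcases h.inn v hv with ⟨h0, h1, f, hf4, hf1, hf2⟩ | h1
        · refine Or.inl ⟨h0, h1, f, hf4, hf1, ?_⟩
          split_ifs at hf2 ⊢ <;> omega
        · exact Or.inr h1
      obtain ⟨m', hm', hI'⟩ := fin _ _ hI hh (by
        intro w hw
        by_cases hwa : w = a
        · subst hwa; exact hya
        · exact hy3 w hw hwa)
      refine ⟨_, _, _, ρ0, by omega, hI', hlt _ (by simpa using hyp) ?_, ?_,
        hstep _ _ _ _ _ hm' h.col⟩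
      · intro w hw hw'
        by_cases hwu : w = u
        · subst hwu; exact hh
        · rwa [Function.update_of_ne hwu] at hw'
      · intro w hw
        have h1 : w ≠ u := by rintro rfl; exact hw huS
        rw [Function.update_of_ne h1]

/-- executing an unblocked scripted move -/
theorem RInv.move {γ : V → ℕ} {F : List (V × ℕ)} {n σ : V → ℕ} {ρ : ℕ}
    {p : V × ℕ} (h : RInv G L S a γ (p :: F) n σ ρ) (hno : ∀ u, G.Adj p.1 u → γ u ≠ p.2) :
    ∃ m, n p.1 = m + 1 ∧
      RInv G L S a (Function.update γ p.1 p.2) F (Function.update n p.1 m) σ ρ := by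
  have hpc : cnt p.1 (p :: F) = cnt p.1 F + 1 := by rw [cnt_cons]; simp
  obtain ⟨m, hm⟩ : ∃ m, n p.1 = m + 1 := by
    refine ⟨n p.1 - 1, ?_⟩
    by_cases hpS : p.1 ∈ S
    · rcases h.inn p.1 hpS with ⟨h0, -⟩ | ⟨-, F1, F2, y, r, hF, -, h2, -⟩
      · omega
      · omega
    · have := h.out p.1 hpS
      omega
  refine ⟨m, hm, update_col h.col h.val.1 hno, h.val.2.2, ?_, ?_, h.sig, ?_⟩
  · intro w hw
    have h1 := h.out w hw
    by_cases hwp : w = p.1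
    · subst hwp; rw [Function.update_self]; omega
    · rw [Function.update_of_ne hwp]
      rw [cnt_cons] at h1; omega
  · have := h.ain
    rw [cnt_cons] at this; omega
  · intro v hv
    rcases h.inn v hv with ⟨h0, h1, f, hf4, hf1, hf2⟩ | ⟨hs, F1, F2, y, r, hF, h1, h2, h3⟩
    · left
      have hvp : v ≠ p.1 := by
        rintro rfl; omega
      refine ⟨by rw [cnt_cons] at h0; omega, ?_⟩
      simp only [FInv, Function.update_of_ne hvp]
      refine ⟨h1, ?_⟩
      by_cases hadj : G.Adj v p.1
      · rw [ev_cons_adj hadj, List.length_cons] at hf2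
        rw [ev_cons_adj hadj] at hf1
        refine ⟨f - 1, by omega, ?_, by omega⟩
        cases f with
        | zero => simp
        | succ f =>
          simp only [List.take_succ_cons, List.mem_cons, not_or] at hf1
          simpa using hf1.2
      · rw [ev_cons_not hadj] at hf2 hf1
        exact ⟨f, hf4, hf1, hf2⟩
    · cases F1 with
      | nil =>
        left
        simp only [List.nil_append, List.cons.injEq] at hF
        obtain ⟨rfl, rfl⟩ := hF
        have hva : v ≠ a := by
          rintro rfl
          have := h.ain
          simp only [] at hpc
          omega
        simp only [cnt_nil] at h2 hm
        refine ⟨h1, by simp [hs], 0, by omega, by simp, ?_⟩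
        simp only [Function.update_self, if_neg hva, hs]
        have : (9 - G.degree v) * r ≤ (9 - G.degree v) * m := Nat.mul_le_mul_left _ (by omega)
        omega
      | cons q F1 =>
        right
        simp only [List.cons_append, List.cons.injEq] at hF
        obtain ⟨rfl, rfl⟩ := hF
        refine ⟨hs, F1, F2, y, r, rfl, h1, ?_, h3⟩
        rw [cnt_cons] at h2
        by_cases hvp : v = p.1
        · subst hvp
          rw [Function.update_self]
          rw [if_pos rfl] at h2
          omega
        · rw [Function.update_of_ne hvp]
          omega

theorem online (hL : ∀ u, (L u).card = 10) (hdeg : ∀ v ∈ S, G.degree v = 5 ∨ G.degree v = 6)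
    (ha : a ∈ S) (hda : G.degree a = 5) : ∀ (F : List (V × ℕ)) (γ n σ : V → ℕ) (ρ : ℕ),
    ∑ v, σ v ≤ ρ → RInv G L S a γ F n σ ρ →
    ∃ γ', Reach G L γ γ' n ∧ IsLColoring G L γ' ∧ ∀ w, w ∉ S → γ' w = exec γ F w := by
  intro F
  induction F with
  | nil =>
    intro γ n σ ρ _ h
    exact ⟨γ, Reach.refl _ _ h.col, h.col, fun _ _ => rfl⟩
  | cons p F ih =>
    have main : ∀ (N : ℕ) (γ n σ : V → ℕ) (ρ : ℕ), hits G γ p ≤ N →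
        ∑ v, σ v ≤ ρ → RInv G L S a γ (p :: F) n σ ρ →
        ∃ γ', Reach G L γ γ' n ∧ IsLColoring G L γ' ∧ ∀ w, w ∉ S → γ' w = exec γ (p :: F) w := by
      intro N
      induction N with
      | zero =>
        intro γ n σ ρ hN hρ h
        have hno : ∀ u, G.Adj p.1 u → γ u ≠ p.2 := by
          intro u hu hh
          have : hits G γ p = 0 := by omega
          rw [hits, Finset.card_eq_zero] at this
          have h2 : u ∈ (∅ : Finset V) := by rw [← this]; simp [hu, hh]
          simp at h2
        obtain ⟨m, hm, hI⟩ := h.move hno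
        obtain ⟨γ', h1, h2, h3⟩ := ih _ _ _ _ hρ hI
        refine ⟨γ', Reach.step _ _ _ _ p.1 p.2 h.col h1 fun w => ?_, h2, h3⟩
        by_cases hw : w = p.1
        · subst hw; simp [hm]
        · simp [hw]
      | succ N ihN =>
        intro γ n σ ρ hN hρ h
        by_cases hz : hits G γ p ≤ N
        · exact ihN γ n σ ρ hz hρ h
        · have : hits G γ p ≠ 0 := by omega
          rw [hits, Finset.card_ne_zero] at this
          obtain ⟨u, hu⟩ := this
          simp only [Finset.mem_filter, Finset.mem_univ, true_and] at hu
          obtain ⟨γ1, n1, σ1, ρ1, hρ1, hI, hlt, hoff, hr⟩ := h.unblock hL hdeg ha hda hρ hu.1 hu.2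
          obtain ⟨γ', h1, h2, h3⟩ := ihN γ1 n1 σ1 ρ1 (by omega) hρ1 hI
          refine ⟨γ', hr _ h1, h2, fun w hw => ?_⟩
          rw [h3 w hw]
          exact exec_congr _ _ _ _ (hoff w hw)
    intro γ n σ ρ hρ h
    exact main _ γ n σ ρ le_rfl hρ h

end Online

section Final

variable {V : Type} [Fintype V] [DecidableEq V] {G : SimpleGraph V} [DecidableRel G.Adj]
  {L : V → Finset ℕ}

theorem ev_bound (v : V) (F : List (V × ℕ)) (k : ℕ) (hk : ∀ u, cnt u F ≤ k) (T : Finset V)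
    (hT : ∀ u ∈ T, G.Adj v u) :
    (ev G v F).length ≤ (G.degree v - T.card) * k + ∑ u ∈ T, cnt u F := by
  have hsub : T ⊆ G.neighborFinset v := fun u hu => by simpa using hT u hu
  rw [ev_length, ← Finset.sum_sdiff hsub]
  have h1 := Finset.sum_le_card_nsmul (G.neighborFinset v \ T) (fun u => cnt u F) k
    (fun u _ => hk u)
  rw [Finset.card_sdiff_of_subset hsub, SimpleGraph.card_neighborFinset_eq_degree,
    smul_eq_mul] at h1
  omega

theorem filter_split {v e : V} (hne : e ≠ v) (F F1 F2 : List (V × ℕ)) (y : ℕ)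
    (h : F.filter (fun p => decide (p.1 ≠ v)) = F1 ++ (e, y) :: F2) :
    ∃ G1 G2, F = G1 ++ (e, y) :: G2 ∧ G1.filter (fun p => decide (p.1 ≠ v)) = F1 ∧
      G2.filter (fun p => decide (p.1 ≠ v)) = F2 := by
  rw [List.filter_eq_append_iff] at h
  obtain ⟨l1, l2, rfl, h1, h2⟩ := h
  rw [List.filter_eq_cons_iff] at h2
  obtain ⟨m1, m2, rfl, h3, h4, h5⟩ := h2
  refine ⟨l1 ++ m1, m2, by simp, ?_, h5⟩
  rw [List.filter_append, h1, List.filter_eq_nil_iff.2 h3, List.append_nil]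

end Final

/-- configuration RC(c): if `G` contains this configuration and `G − S` has a
`k`-good recoloring sequence between the restrictions of `α` and `β` (`k ≥ 416`),
then `G` has a `k`-good recoloring sequence from `α` to `β`. -/
theorem stmt_8 {V : Type} [Fintype V] [DecidableEq V]
    (G : SimpleGraph V) [DecidableRel G.Adj]
    (k : ℕ) (hk : 416 ≤ k)
    (L : V → Finset ℕ) (hL : ∀ u, (L u).card = 10)
    (α β : V → ℕ) (hα : IsLColoring G L α) (hβ : IsLColoring G L β)
    (a b c d e : V) (hnodup : ([a, b, c, d, e] : List V).Nodup)
    (he1: G.Adj a b)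
    (he2: G.Adj b c)
    (he3: G.Adj c d)
    (he4: G.Adj d e)
    (he5: G.Adj a c)
    (he6: G.Adj b d)
    (hda : G.degree a = 5)
    (hdb : G.degree b = 6)
    (hdc : G.degree c = 6)
    (hdd : G.degree d = 6)
    (hde : G.degree e = 5)
    (S : Set V) (hS : S = {a, b, c, d, e})
    (hrec : ∃ (m : ℕ) (φ : Fin (m + 1) → ↥(Sᶜ) → ℕ),
      IsRecolSeq (G.induce Sᶜ) (fun u => L u.1) φ (fun u => α u.1) (fun u => β u.1) ∧
      ∀ u : ↥(Sᶜ), recolorCount φ u ≤ k) :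
    ∃ (M : ℕ) (ψ : Fin (M + 1) → V → ℕ),
      IsRecolSeq G L ψ α β ∧ ∀ u : V, recolorCount ψ u ≤ k := by

  simp only [List.nodup_cons, List.mem_cons, List.not_mem_nil, or_false, not_or, not_false_eq_true,
    List.nodup_nil, and_true] at hnodup
  obtain ⟨⟨hab, hac, had, hae⟩, ⟨hbc, hbd, hbe⟩, ⟨hcd, hce⟩, hde'⟩ := hnodup
  have memS : ∀ u, u ∈ S ↔ u = a ∨ u = b ∨ u = c ∨ u = d ∨ u = e := by
    intro u; rw [hS]; simp
  obtain ⟨m, φ, ⟨hφ0, hφ1, hφc, hφs⟩, hφk⟩ := hrec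
  obtain ⟨F0, hV0, hz0, hx0, hc0⟩ := toScript (G := G) (L := L) S m φ α
    (fun u => by rw [hφ0]) hφc hφs
  have hk0 : ∀ u, cnt u F0 ≤ k := by
    intro u
    by_cases hu : u ∈ S
    · rw [hz0 u hu]; omega
    · exact (hc0 ⟨u, hu⟩).trans (hφk _)
  have aS : a ∈ S := (memS a).2 (by simp)
  have bS : b ∈ S := (memS b).2 (by simp)
  have cS : c ∈ S := (memS c).2 (by simp)
  have dS : d ∈ S := (memS d).2 (by simp)
  have eS : e ∈ S := (memS e).2 (by simp)
  -- the script of `e`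
  obtain ⟨Fe, E1, E2, y, hVe, hfe, hce', hFe, hE2, hlE⟩ := plan (G := G) (L := L) S e (hL e)
    ((G.neighborFinset e).erase d) (by
      rw [Finset.card_erase_of_mem (by simpa using he4.symm),
        SimpleGraph.card_neighborFinset_eq_degree]; omega) F0 α 44 0 (by
      intro u hu hact
      simp only [Finset.mem_erase, SimpleGraph.mem_neighborFinset]
      refine ⟨?_, hu⟩
      rintro rfl
      rcases hact with h | h
      · exact h dS
      · exact h (hz0 _ dS)) hV0 (hz0 e eS) eS (hα.1 e) (fun u hu _ => (hα.2 hu).symm) (by simp)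
  have hlE0 : (ev G e F0).length ≤ 4 * k := by
    have := ev_bound (G := G) e F0 k hk0 {d} (by simpa using he4.symm)
    simpa [hde, hz0 d dS] using this
  have hcF : ∀ u, u ≠ e → cnt u Fe = cnt u F0 := by
    intro u hu
    rw [← hfe, cnt_filter _ _ _ hu]
  have hke : ∀ u, cnt u Fe ≤ k := by
    intro u
    by_cases hu : u = e
    · subst hu; omega
    · rw [hcF u hu]; exact hk0 u
  -- the script of `d`
  have hbz : cnt b Fe = 0 := by rw [hcF b hbe]; exact hz0 b bS
  have hcz : cnt c Fe = 0 := by rw [hcF c hce]; exact hz0 c cS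
  have haz : cnt a Fe = 0 := by rw [hcF a hae]; exact hz0 a aS
  obtain ⟨Fd, D1, D2, z, hVd, hfd, hcd', hFd, hD2, hlD⟩ := plan (G := G) (L := L) S d (hL d)
    (((G.neighborFinset d).erase b).erase c) (by
      rw [Finset.card_erase_of_mem (by simp [he3.symm, Ne.symm hbc]),
        Finset.card_erase_of_mem (by simpa using he6.symm),
        SimpleGraph.card_neighborFinset_eq_degree]; omega) Fe α 28 0 (by
      intro u hu hact
      simp only [Finset.mem_erase, SimpleGraph.mem_neighborFinset]
      refine ⟨?_, ?_, hu⟩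
      · rintro rfl
        rcases hact with h | h
        · exact h cS
        · exact h hcz
      · rintro rfl
        rcases hact with h | h
        · exact h bS
        · exact h hbz) hVe (by rw [hcF d hde']; exact hz0 d dS) dS (hα.1 d)
      (fun u hu _ => (hα.2 hu).symm) (by simp)
  have hlD0 : (ev G d Fe).length ≤ 3 * k + 45 := by
    have := ev_bound (G := G) d Fe k hke {b, c, e} (by
      simp [he6.symm, he3.symm, he4])
    rw [Finset.sum_insert (by simp [hbc, hbe]), Finset.sum_insert (by simp [hce]),
      Finset.sum_singleton, Finset.card_insert_of_notMem (by simp [hbc, hbe]),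
      Finset.card_insert_of_notMem (by simp [hce]), Finset.card_singleton, hdd, hbz, hcz] at this
    omega
  have hcD : ∀ u, u ≠ d → cnt u Fd = cnt u Fe := by
    intro u hu
    rw [← hfd, cnt_filter _ _ _ hu]
  have hkd : ∀ u, cnt u Fd ≤ k := by
    intro u
    by_cases hu : u = d
    · subst hu; omega
    · rw [hcD u hu]; exact hke u
  have hbz' : cnt b Fd = 0 := by rw [hcD b hbd]; exact hbz
  have hcz' : cnt c Fd = 0 := by rw [hcD c hcd]; exact hcz
  have haz' : cnt a Fd = 0 := by rw [hcD a had]; exact haz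
  -- transfer of the script of `e`
  obtain ⟨G1, G2, hG, hG1, hG2⟩ := filter_split (Ne.symm hde') Fd E1 E2 y (by rw [hfd, hFe])
  have hlG2 : (ev G e G2).length ≤ 4 * k - 220 + 29 := by
    have h1 := ev_length_insert (G := G) e d G2
    rw [hG2] at h1
    have h2 : cnt d G2 ≤ cnt d Fd := by
      rw [hG, cnt_append, cnt_cons]; omega
    omega
  have hcG1 : cnt e G1 + 1 ≤ 45 := by
    have h1 : cnt e Fd ≤ 45 := by rw [hcD e (Ne.symm hde')]; exact hce'
    rw [hG, cnt_append, cnt_cons, if_pos rfl] at h1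
    omega
  have hcG2 : cnt e G2 = 0 := by
    rw [← cnt_filter d e G2 (Ne.symm hde'), hG2]; exact hE2
  have hcD1 : cnt d D1 + 1 ≤ 29 := by
    have h1 := hcd'
    rw [hFd, cnt_append, cnt_cons, if_pos rfl] at h1
    omega
  -- the online phase
  obtain ⟨γ, hr, hcol, hoff⟩ := online (G := G) (L := L) (S := S) (a := a) hL (by
      intro v hv
      rcases (memS v).1 hv with rfl | rfl | rfl | rfl | rfl <;> simp [*]) aS hda Fd α
    (fun u => if u ∈ ({a, b, c, d, e} : Finset V) then k - 2 else k)
    (fun u => if u ∈ ({b, c} : Finset V) then 37 else 0) 74 (by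
      rw [Finset.sum_ite_mem, Finset.univ_inter, Finset.sum_const,
        Finset.card_insert_of_notMem (by simpa using hbc), Finset.card_singleton]; simp) (by
      refine ⟨hα, hVd, ?_, haz', ?_, ?_⟩
      · intro w hw
        rw [memS] at hw
        rw [if_neg (by simpa using hw)]
        exact hkd w
      · intro v hv
        have hv' : v = b ∨ v = c := by
          by_contra hcon
          exact hv (if_neg (by simpa using hcon))
        rcases hv' with rfl | rfl
        · exact ⟨bS, hdb, he1.symm⟩
        · exact ⟨cS, hdc, he5.symm⟩
      · intro v hv
        rcases (memS v).1 hv with rfl | rfl | rfl | rfl | rfl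
        · refine Or.inl ⟨haz', by simp [hab, hac], 0, by omega, by simp, ?_⟩
          have h1 := ev_bound (G := G) v Fd k hkd {b, c} (by simp [he1, he5])
          rw [Finset.sum_insert (by simp [hbc]), Finset.sum_singleton,
            Finset.card_insert_of_notMem (by simp [hbc]), Finset.card_singleton, hbz', hcz',
            hda] at h1
          simp [hda, hab, hac]
          omega
        · have h0 : v ≠ a := Ne.symm hab
          refine Or.inl ⟨hbz', by simp; omega, 0, by omega, by simp, ?_⟩
          have h1 := ev_bound (G := G) v Fd k hkd {a, c, d} (by simp [he1.symm, he2, he6])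
          rw [Finset.sum_insert (by simp [hac, had]), Finset.sum_insert (by simp [hcd]),
            Finset.sum_singleton, Finset.card_insert_of_notMem (by simp [hac, had]),
            Finset.card_insert_of_notMem (by simp [hcd]), Finset.card_singleton, haz', hcz',
            hdb] at h1
          simp [hdb, h0]
          omega
        · have h0 : v ≠ a := Ne.symm hac
          refine Or.inl ⟨hcz', by simp; omega, 0, by omega, by simp, ?_⟩
          have h1 := ev_bound (G := G) v Fd k hkd {a, b, d} (by simp [he2.symm, he5.symm, he3])
          rw [Finset.sum_insert (by simp [hab, had]), Finset.sum_insert (by simp [hbd]),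
            Finset.sum_singleton, Finset.card_insert_of_notMem (by simp [hab, had]),
            Finset.card_insert_of_notMem (by simp [hbd]), Finset.card_singleton, haz', hbz',
            hdc] at h1
          simp [hdc, h0]
          omega
        · refine Or.inr ⟨by simp [Ne.symm hbd, Ne.symm hcd], D1, D2, z, k - 31, hFd, hD2, ?_, ?_⟩
          · simp; omega
          · rw [hdd]; omega
        · refine Or.inr ⟨by simp [Ne.symm hbe, Ne.symm hce], G1, G2, y, k - 47, hG, hcG2, ?_, ?_⟩
          · simp; omega
          · rw [hde]; omega)
  have hfin := finalPhase (G := G) (L := L) hL hβ hcol [e, d, c, b, a] (by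
      simp [Ne.symm hde', Ne.symm hce, Ne.symm hbe, Ne.symm hae, Ne.symm hcd, Ne.symm hbd,
        Ne.symm had, Ne.symm hbc, Ne.symm hac, Ne.symm hab]) (by
      intro u hu
      have huS : u ∉ S := by
        rw [memS]
        simp only [List.mem_cons, List.not_mem_nil, or_false, not_or] at hu
        rintro (h | h | h | h | h)
        · exact hu.2.2.2.2 h
        · exact hu.2.2.2.1 h
        · exact hu.2.2.1 h
        · exact hu.2.1 h
        · exact hu.1 h
      have hud : u ≠ d := by rintro rfl; exact huS dS
      have hue : u ≠ e := by rintro rfl; exact huS eS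
      rw [hoff u huS, ← exec_filter d Fd α u hud, hfd, ← exec_filter e Fe α u hue, hfe]
      have := hx0 ⟨u, huS⟩
      rw [hφ1] at this
      exact this) (by
      intro l1 v l2 h
      match l1, h with
      | [], h => simp at h; rw [← h.1]; simp [hde]
      | [_], h => simp at h; rw [← h.2.1]; simp [hdd]
      | [_, _], h => simp at h; rw [← h.2.2.1]; simp [hdc]
      | [_, _, _], h => simp at h; rw [← h.2.2.2.1]; simp [hdb]
      | [_, _, _, _], h => simp at h; rw [← h.2.2.2.2.1]; simp [hda]
      | _ :: _ :: _ :: _ :: _ :: _, h => simp at h)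
  refine ((hr.trans hfin).mono (m := fun _ => k) fun u => ?_).toSeq
  have hnd : ([e, d, c, b, a] : List V).Nodup := by
    simp [Ne.symm hde', Ne.symm hce, Ne.symm hbe, Ne.symm hae, Ne.symm hcd, Ne.symm hbd,
        Ne.symm had, Ne.symm hbc, Ne.symm hac, Ne.symm hab]
  simp only [Pi.add_apply]
  split_ifs with hu
  · have := List.nodup_iff_count_le_one.1 hnd u
    omega
  · rw [List.count_eq_zero_of_not_mem (fun h => hu (by
      simp only [List.mem_cons, List.not_mem_nil, or_false] at h
      rcases h with h | h | h | h | h <;> simp [h]))]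
    omega
end

section
/- Fix an integer k ≥ 416. Let G be a finite simple graph, L a 10-assignment for G, and α, β two L-colorings of G. Suppose G contains three distinct vertices v1, v2, w forming a triangle (edges v1v2, v1w, v2w) with d_G(v1) = d_G(v2) = 5 and d_G(w) = 6. Let S = {v1, v2, w}. If there exists a k-good recoloring sequence in G − S from the restriction of α to G − S to the restriction of β to G − S, then there exists a k-good recoloring sequence in G from α to β. -/
namespace Recol

variable {V : Type} [DecidableEq V]

/-- `φ` is a proper `L`-colouring of the graph `G - T`. -/
def Ok (G : SimpleGraph V) (L : V → Finset ℕ) (T : Finset V) (φ : V → ℕ) : Prop :=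
  (∀ v, v ∉ T → φ v ∈ L v) ∧ ∀ u v, u ∉ T → v ∉ T → G.Adj u v → φ u ≠ φ v

/-- Every colouring met while performing the moves is proper on `G - T`. -/
def Valid (G : SimpleGraph V) (L : V → Finset ℕ) (T : Finset V) :
    (V → ℕ) → List (V × ℕ) → Prop
  | φ, [] => Ok G L T φ
  | φ, m :: ms => Ok G L T φ ∧ Valid G L T (Function.update φ m.1 m.2) ms

def run : (V → ℕ) → List (V × ℕ) → (V → ℕ)
  | φ, [] => φ
  | φ, m :: ms => run (Function.update φ m.1 m.2) ms

def cnt (v : V) (ms : List (V × ℕ)) : ℕ := ms.countP (fun m => decide (m.1 = v))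

def ev (G : SimpleGraph V) [DecidableRel G.Adj] (x : V) (ms : List (V × ℕ)) : List ℕ :=
  (ms.filter (fun m => decide (G.Adj x m.1))).map Prod.snd

variable {G : SimpleGraph V} {L : V → Finset ℕ}

theorem cnt_cons (v : V) (m : V × ℕ) (ms : List (V × ℕ)) :
    cnt v (m :: ms) = cnt v ms + if m.1 = v then 1 else 0 := by
  simp [cnt, List.countP_cons]

theorem cnt_append (v : V) (a b : List (V × ℕ)) : cnt v (a ++ b) = cnt v a + cnt v b := by
  simp [cnt]

theorem run_append (φ : V → ℕ) (a b : List (V × ℕ)) : run φ (a ++ b) = run (run φ a) b := by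
  induction a generalizing φ with
  | nil => rfl
  | cons m a ih => exact ih _

theorem Valid.head {T : Finset V} {φ : V → ℕ} {ms : List (V × ℕ)} (h : Valid G L T φ ms) :
    Ok G L T φ := by
  cases ms with
  | nil => exact h
  | cons m ms => exact h.1

theorem Valid.last {T : Finset V} {φ : V → ℕ} {ms : List (V × ℕ)} (h : Valid G L T φ ms) :
    Ok G L T (run φ ms) := by
  induction ms generalizing φ with
  | nil => exact h
  | cons m ms ih => exact ih h.2

theorem Valid.append {T : Finset V} {φ : V → ℕ} {a b : List (V × ℕ)} (h : Valid G L T φ a)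
    (h' : Valid G L T (run φ a) b) : Valid G L T φ (a ++ b) := by
  induction a generalizing φ with
  | nil => exact h'
  | cons m a ih => exact ⟨h.1, ih h.2 h'⟩

theorem Ok.congr {T : Finset V} {φ φ' : V → ℕ} (h : Ok G L T φ) (e : ∀ v, v ∉ T → φ' v = φ v) :
    Ok G L T φ' := by
  refine ⟨fun v hv => ?_, fun u v hu hv huv => ?_⟩
  · rw [e v hv]; exact h.1 v hv
  · rw [e v hv, e u hu]; exact h.2 u v hu hv huv

theorem update_agree {T : Finset V} {φ φ' : V → ℕ} (e : ∀ v, v ∉ T → φ' v = φ v) (u : V) (c : ℕ) :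
    ∀ v, v ∉ T → Function.update φ' u c v = Function.update φ u c v := by
  intro v hv
  by_cases h : v = u
  · subst h; simp
  · simp [h, e v hv]

theorem Valid.congr {T : Finset V} {φ φ' : V → ℕ} {ms : List (V × ℕ)} (h : Valid G L T φ ms)
    (e : ∀ v, v ∉ T → φ' v = φ v) : Valid G L T φ' ms := by
  induction ms generalizing φ φ' with
  | nil => exact Ok.congr h e
  | cons m ms ih => exact ⟨h.1.congr e, ih h.2 (update_agree e _ _)⟩

theorem run_congr {T : Finset V} {φ φ' : V → ℕ} (ms : List (V × ℕ))
    (e : ∀ v, v ∉ T → φ' v = φ v) : ∀ v, v ∉ T → run φ' ms v = run φ ms v := by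
  induction ms generalizing φ φ' with
  | nil => exact e
  | cons m ms ih => exact ih (update_agree e _ _)

theorem Ok.update {T : Finset V} {φ : V → ℕ} (h : Ok G L T φ) {x : V} {c : ℕ} (hc : c ∈ L x)
    (hn : ∀ v, v ∉ T → G.Adj x v → φ v ≠ c) : Ok G L T (Function.update φ x c) := by
  refine ⟨fun v hv => ?_, fun u v hu hv huv => ?_⟩
  · by_cases e : v = x
    · subst e; simpa using hc
    · simpa [e] using h.1 v hv
  · by_cases e : u = x
    · subst e
      have : v ≠ u := huv.ne'
      simpa [this] using (hn v hv huv).symm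
    · by_cases e' : v = x
      · subst e'
        simpa [e] using hn u hu huv.symm
      · simpa [e, e'] using h.2 u v hu hv huv

variable [Fintype V] [DecidableRel G.Adj]

theorem exists_color (T : Finset V) (φ : V → ℕ) (x : V) (F : Finset ℕ)
    (h : F.card + ((G.neighborFinset x).filter (· ∉ T)).card < (L x).card) :
    ∃ c ∈ L x, c ∉ F ∧ ∀ v, v ∉ T → G.Adj x v → φ v ≠ c := by
  have h1 : (F ∪ ((G.neighborFinset x).filter (· ∉ T)).image φ).card < (L x).card := by
    refine lt_of_le_of_lt (Finset.card_union_le _ _) (lt_of_le_of_lt ?_ h)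
    exact Nat.add_le_add_left Finset.card_image_le _
  obtain ⟨c, hc, hc'⟩ := Finset.exists_mem_notMem_of_card_lt_card h1
  refine ⟨c, hc, fun hF => hc' (Finset.mem_union_left _ hF), fun v hv hxv e => hc' ?_⟩
  refine Finset.mem_union_right _ (Finset.mem_image.2 ⟨v, ?_, e⟩)
  simp [hv, hxv]

theorem ev_length (T : Finset V) (x : V) (ms : List (V × ℕ)) (hT : ∀ m ∈ ms, m.1 ∉ T) :
    (ev G x ms).length ≤ ∑ u ∈ (G.neighborFinset x).filter (· ∉ T), cnt u ms := by
  induction ms with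
  | nil => simp [ev]
  | cons m ms ih =>
    have ih' := ih (fun m hm => hT m (List.mem_cons_of_mem _ hm))
    simp only [cnt_cons, Finset.sum_add_distrib]
    have hm : m.1 ∉ T := hT m List.mem_cons_self
    by_cases hx : G.Adj x m.1
    · have : (ev G x (m :: ms)).length = (ev G x ms).length + 1 := by simp [ev, hx]
      rw [this]
      have : (∑ u ∈ (G.neighborFinset x).filter (· ∉ T), if m.1 = u then 1 else 0) = 1 := by
        rw [Finset.sum_ite_eq]; simp [hx, hm]
      omega
    · have : (ev G x (m :: ms)).length = (ev G x ms).length := by simp [ev, hx]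
      omega

theorem le_idxOf (c : ℕ) (s : ℕ) (E : List ℕ) (h : c ∉ E.take s) :
    s ≤ E.idxOf c ∨ E.length ≤ E.idxOf c := by
  by_contra! hh
  apply h
  rw [List.mem_take_iff_getElem]
  refine ⟨E.idxOf c, by omega, ?_⟩
  simp

theorem extend (T T' : Finset V) (hTT : T ⊆ T') (s : V → ℕ)
    (hs : ∀ x, x ∈ T' → x ∉ T → 1 ≤ s x ∧
      s x + ((G.neighborFinset x).filter (· ∉ T)).card + 1 ≤ (L x).card)
    (ms : List (V × ℕ)) : ∀ (φ : V → ℕ), (∀ m ∈ ms, m.1 ∉ T') → Valid G L T' φ ms → Ok G L T φ →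
    ∃ ms', Valid G L T φ ms' ∧ (∀ u, u ∉ T' → run φ ms' u = run φ ms u) ∧
      (∀ u, u ∉ T' → cnt u ms' = cnt u ms) ∧ (∀ m ∈ ms', m.1 ∉ T) ∧
      ∀ x, x ∈ T' → x ∉ T →
        s x * cnt x ms' + (ev G x ms).idxOf (φ x) + 1 ≤ (ev G x ms).length + s x := by
  induction ms with
  | nil =>
    intro φ _ _ hok
    refine ⟨[], hok, fun _ _ => rfl, fun _ _ => rfl, by simp, fun x hx hx' => ?_⟩
    have := (hs x hx hx').1
    simp [cnt, ev]; omega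
  | cons m ms ih =>
    obtain ⟨u, c⟩ := m
    intro φ hoff hval hok
    have hu : u ∉ T' := hoff (u, c) List.mem_cons_self
    -- inner induction on the number of conflicts with the next move
    generalize hn : (T'.filter (fun x => x ∉ T ∧ G.Adj x u ∧ φ x = c)).card = n
    induction n using Nat.strong_induction_on generalizing φ with
    | _ n ihn =>
    by_cases hbad : ∃ x, x ∈ T' ∧ x ∉ T ∧ G.Adj x u ∧ φ x = c
    · obtain ⟨x, hx, hxT, hxu, hxc⟩ := hbad
      obtain ⟨hs1, hs2⟩ := hs x hx hxT
      have hE : ev G x ((u, c) :: ms) = c :: ev G x ms := by simp [ev, hxu]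
      obtain ⟨c', hc'L, hc'F, hc'N⟩ := exists_color (G := G) (L := L) T φ x
        ((ev G x ((u, c) :: ms)).take (s x)).toFinset (by
          have := List.toFinset_card_le ((ev G x ((u, c) :: ms)).take (s x))
          have := List.length_take_le (s x) (ev G x ((u, c) :: ms))
          omega)
      rw [List.mem_toFinset] at hc'F
      have hcc : c' ≠ c := by
        rintro rfl
        apply hc'F
        rw [hE]
        obtain ⟨t, ht⟩ : ∃ t, s x = t + 1 := ⟨s x - 1, by omega⟩
        rw [ht]; simp
      have hagree : ∀ v, v ∉ T' → Function.update φ x c' v = φ v := by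
        intro v hv
        have : v ≠ x := by rintro rfl; exact hv hx
        simp [this]
      obtain ⟨ms', h1, h2, h3, h4, h5⟩ := ihn _ (by
          rw [← hn]
          apply Finset.card_lt_card
          rw [Finset.ssubset_iff_of_subset]
          · refine ⟨x, by simp [hx, hxT, hxu, hxc], by simp [hcc]⟩
          · intro y hy
            rw [Finset.mem_filter] at hy ⊢
            obtain ⟨a1, a2, a3, a4⟩ := hy
            refine ⟨a1, a2, a3, ?_⟩
            by_cases e : y = x
            · subst e; exact hxc
            · simpa [e] using a4) (Function.update φ x c') (hval.congr hagree)
          (hok.update hc'L hc'N) rfl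
      refine ⟨(x, c') :: ms', ⟨hok, h1⟩, fun v hv => ?_, fun v hv => ?_, ?_, fun y hy hyT => ?_⟩
      · exact (h2 v hv).trans (run_congr _ hagree v hv)
      · have : x ≠ v := by rintro rfl; exact hv hx
        rw [cnt_cons, if_neg this, h3 v hv, add_zero]
      · intro m hm
        rcases List.mem_cons.1 hm with rfl | hm
        · exact hxT
        · exact h4 m hm
      · have h5' := h5 y hy hyT
        by_cases e : y = x
        · subst e
          rw [cnt_cons, if_pos rfl]
          have hidx := le_idxOf _ _ _ hc'F
          simp only [Function.update_self] at h5'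
          have h0 : (ev G y ((u, c) :: ms)).idxOf (φ y) = 0 := by rw [hE, hxc]; simp
          have hl : 1 ≤ (ev G y ((u, c) :: ms)).length := by rw [hE]; simp
          rw [h0]
          rcases hidx with hidx | hidx
          · rw [mul_add]; omega
          · have hz : s y * cnt y ms' < s y * 1 := by omega
            have hz' : cnt y ms' = 0 := by
              have := Nat.lt_of_mul_lt_mul_left hz
              omega
            rw [hz']; omega
        · rw [cnt_cons, if_neg (fun h => e h.symm)]
          simpa [e] using h5'
    · push Not at hbad
      have hval2 : Valid G L T' (Function.update φ u c) ms := hval.2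
      have hok' : Ok G L T (Function.update φ u c) := by
        have huT : u ∉ T := fun h => hu (hTT h)
        refine hok.update ?_ ?_
        · simpa using hval2.head.1 u hu
        · intro v hv huv
          by_cases hvT : v ∈ T'
          · exact hbad v hvT hv huv.symm
          · have := hval2.head.2 u v hu hvT huv
            have hne : v ≠ u := huv.ne'
            simpa [hne] using this.symm
      obtain ⟨ms', h1, h2, h3, h4, h5⟩ := ih (Function.update φ u c)
        (fun m hm => hoff m (List.mem_cons_of_mem _ hm)) hval2 hok'
      refine ⟨(u, c) :: ms', ⟨hok, h1⟩, h2, fun v hv => ?_, ?_, fun y hy hyT => ?_⟩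
      · rw [cnt_cons, cnt_cons, h3 v hv]
      · intro m hm
        rcases List.mem_cons.1 hm with rfl | hm
        · exact fun h => hu (hTT h)
        · exact h4 m hm
      · have hyu : y ≠ u := by rintro rfl; exact hu hy
        have h5' := h5 y hy hyT
        rw [Function.update_of_ne hyu] at h5'
        rw [cnt_cons, if_neg (fun h => hyu h.symm), add_zero]
        by_cases hadj : G.Adj y u
        · have hE : ev G y ((u, c) :: ms) = c :: ev G y ms := by simp [ev, hadj]
          rw [hE, List.idxOf_cons_ne _ (hbad y hy hyT hadj).symm, List.length_cons]
          omega
        · have hE : ev G y ((u, c) :: ms) = ev G y ms := by simp [ev, hadj]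
          rw [hE]; omega

theorem recolorCount_succ {W : Type} {m : ℕ} (φ : Fin (m + 2) → W → ℕ) (v : W) :
    recolorCount φ v = recolorCount (fun i : Fin (m + 1) => φ i.succ) v +
      if φ 0 v ≠ φ 1 v then 1 else 0 := by
  unfold recolorCount
  rw [Fin.card_filter_univ_succ]
  simp only [Fin.castSucc_zero, Fin.succ_zero_eq_one, Function.comp_def, Fin.castSucc_succ]
  split_ifs <;> rfl

theorem toSeq (ms : List (V × ℕ)) : ∀ (φ : V → ℕ), Valid G L ∅ φ ms →
    ∃ (M : ℕ) (ψ : Fin (M + 1) → V → ℕ), IsRecolSeq G L ψ φ (run φ ms) ∧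
      ∀ u, recolorCount ψ u ≤ cnt u ms := by
  induction ms with
  | nil =>
    intro φ h
    refine ⟨0, fun _ => φ, ⟨rfl, rfl, fun _ => ⟨fun v => h.1 v (by simp), fun u v huv =>
      h.2 u v (by simp) (by simp) huv⟩, fun i => i.elim0⟩, fun u => by simp [recolorCount]⟩
  | cons m ms ih =>
    obtain ⟨x, c⟩ := m
    intro φ h
    obtain ⟨M, ψ, ⟨h1, h2, h3, h4⟩, h5⟩ := ih _ h.2
    simp only at h1 h2
    by_cases e : φ x = c
    · have e' : Function.update φ x c = φ := by rw [← e]; simp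
      refine ⟨M, ψ, ⟨h1.trans e', h2, h3, h4⟩, fun u => (h5 u).trans ?_⟩
      rw [cnt_cons]; omega
    · refine ⟨M + 1, Fin.cons φ ψ, ⟨rfl, ?_, ?_, ?_⟩, fun u => ?_⟩
      · rw [← Fin.succ_last, Fin.cons_succ]; exact h2
      · intro i
        refine Fin.cases ?_ (fun j => ?_) i
        · exact ⟨fun v => h.1.1 v (by simp), fun u v huv => h.1.2 u v (by simp) (by simp) huv⟩
        · rw [Fin.cons_succ]; exact h3 j
      · intro i
        refine Fin.cases ?_ (fun j => ?_) i
        · rw [Fin.castSucc_zero, Fin.cons_zero, Fin.cons_succ, h1]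
          refine ⟨x, by simpa using e, fun y hy => ?_⟩
          by_contra hyx
          simp [hyx] at hy
        · rw [← Fin.succ_castSucc, Fin.cons_succ, Fin.cons_succ]; exact h4 j
      · rw [recolorCount_succ, cnt_cons]
        have a1 : (Fin.cons φ ψ : Fin (M + 2) → V → ℕ) 1 = Function.update φ x c := by
          rw [← Fin.succ_zero_eq_one, Fin.cons_succ, h1]
        rw [a1]
        simp only [Fin.cons_succ, Fin.cons_zero]
        have h5u : recolorCount (fun i => ψ i) u ≤ cnt u ms := h5 u
        by_cases hu : u = x
        · subst hu
          simp only [if_pos]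
          split_ifs <;> omega
        · have : ¬ (φ u ≠ Function.update φ x c u) := by simp [hu]
          rw [if_neg this]; omega

theorem ofSeq (S : Set V) (T : Finset V) (hST : ∀ v, v ∈ T ↔ v ∈ S) (m : ℕ) :
    ∀ (φ : Fin (m + 1) → ↥(Sᶜ) → ℕ) (φ0 : V → ℕ), (∀ u : ↥(Sᶜ), φ0 u = φ 0 u) →
    (∀ i, IsLColoring (G.induce Sᶜ) (fun u => L u.1) (φ i)) →
    (∀ i : Fin m, ∃! v : ↥(Sᶜ), φ i.castSucc v ≠ φ i.succ v) →
    ∃ ms, Valid G L T φ0 ms ∧ (∀ u : ↥(Sᶜ), run φ0 ms u = φ (Fin.last m) u) ∧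
      (∀ u : ↥(Sᶜ), cnt u.1 ms ≤ recolorCount φ u) ∧ ∀ m ∈ ms, m.1 ∉ T := by
  have hOk : ∀ (χ : ↥(Sᶜ) → ℕ) (φ0 : V → ℕ), (∀ u : ↥(Sᶜ), φ0 u = χ u) →
      IsLColoring (G.induce Sᶜ) (fun u => L u.1) χ → Ok G L T φ0 := by
    intro χ φ0 h0 h
    refine ⟨fun v hv => ?_, fun u v hu hv huv => ?_⟩
    · rw [hST] at hv
      have := h.1 ⟨v, hv⟩
      rwa [← h0] at this
    · rw [hST] at hu hv
      have := h.2 (u := ⟨u, hu⟩) (w := ⟨v, hv⟩) huv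
      rwa [← h0, ← h0] at this
  induction m with
  | zero =>
    intro φ φ0 h0 h1 _
    exact ⟨[], hOk _ _ h0 (h1 0), h0, fun u => by simp [cnt], by simp⟩
  | succ m ih =>
    intro φ φ0 h0 h1 h2
    obtain ⟨x, hx, hxu⟩ := h2 0
    rw [Fin.castSucc_zero, Fin.succ_zero_eq_one] at hx
    simp only [Fin.castSucc_zero, Fin.succ_zero_eq_one] at hxu
    obtain ⟨ms, a1, a2, a3, a4⟩ := ih (fun i => φ i.succ) (Function.update φ0 x.1 (φ 1 x)) (by
        intro u
        rw [Fin.succ_zero_eq_one]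
        by_cases e : u = x
        · subst e; simp
        · have e' : u.1 ≠ x.1 := fun h => e (Subtype.ext h)
          rw [Function.update_of_ne e', h0]
          by_contra hne
          exact e (hxu u hne)) (fun i => h1 _) (fun i => by
        have := h2 i.succ
        rwa [← Fin.succ_castSucc] at this)
    refine ⟨(x.1, φ 1 x) :: ms, ⟨hOk _ _ h0 (h1 0), a1⟩, ?_, fun u => ?_, ?_⟩
    · intro u
      rw [← Fin.succ_last]; exact a2 u
    · rw [cnt_cons, recolorCount_succ]
      have := a3 u
      by_cases e : u = x
      · subst e; rw [if_pos rfl, if_pos hx]; omega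
      · have e' : x.1 ≠ u.1 := fun h => e (Subtype.ext h.symm)
        rw [if_neg e']; omega
    · intro m hm
      rcases List.mem_cons.1 hm with rfl | hm
      · rw [hST]; exact x.2
      · exact a4 m hm

/-- Last phase: fix the colours of the two remaining adjacent vertices. -/
theorem finish (φ β : V → ℕ) (hφ : Ok G L ∅ φ) (hβ : Ok G L ∅ β) (a b : V) (hab : G.Adj a b)
    (hL : (G.neighborFinset a).card + 1 < (L a).card)
    (h : ∀ u, u ≠ a → u ≠ b → φ u = β u) :
    ∃ ms, Valid G L ∅ φ ms ∧ run φ ms = β ∧ (∀ u, u ≠ a → u ≠ b → cnt u ms = 0) ∧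
      cnt a ms ≤ 2 ∧ cnt b ms ≤ 2 := by
  obtain ⟨c, hcL, hcF, hcN⟩ := exists_color (G := G) (L := L) ∅ φ a {β b} (by
    simpa [add_comm] using hL)
  rw [Finset.mem_singleton] at hcF
  have hne : a ≠ b := hab.ne
  have ok1 : Ok G L ∅ (Function.update φ a c) := hφ.update hcL hcN
  have ok2 : Ok G L ∅ (Function.update (Function.update φ a c) b (β b)) := by
    refine ok1.update (hβ.1 b (by simp)) fun v hv hbv => ?_
    by_cases e : v = a
    · subst e; simpa using hcF
    · have e' : v ≠ b := hbv.ne'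
      simpa [e, h v e e'] using hβ.2 v b (by simp) (by simp) hbv.symm
  have e3 : Function.update (Function.update (Function.update φ a c) b (β b)) a (β a) = β := by
    funext v
    by_cases e : v = a
    · subst e; simp
    · by_cases e' : v = b
      · subst e'; simp [e]
      · simp [e, e', h v e e']
  refine ⟨[(a, c), (b, β b), (a, β a)], ⟨hφ, ok1, ok2, ?_⟩, e3, fun u h1 h2 => ?_, ?_, ?_⟩
  · show Ok G L ∅ _
    rw [e3]; exact hβ
  · simp [cnt, h1.symm, h2.symm]
  · simp [cnt, hne.symm]
  · simp [cnt, hne]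

end Recol

/-- two adjacent 5-vertices with a common 6-neighbor: if `G` contains this configuration and `G − S` has a
`k`-good recoloring sequence between the restrictions of `α` and `β` (`k ≥ 416`),
then `G` has a `k`-good recoloring sequence from `α` to `β`. -/
theorem stmt_11 {V : Type} [Fintype V] [DecidableEq V]
    (G : SimpleGraph V) [DecidableRel G.Adj]
    (k : ℕ) (hk : 416 ≤ k)
    (L : V → Finset ℕ) (hL : ∀ u, (L u).card = 10)
    (α β : V → ℕ) (hα : IsLColoring G L α) (hβ : IsLColoring G L β)
    (v1 v2 w : V) (hnodup : ([v1, v2, w] : List V).Nodup)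
    (he1: G.Adj v1 v2)
    (he2: G.Adj v1 w)
    (he3: G.Adj v2 w)
    (hdv1 : G.degree v1 = 5)
    (hdv2 : G.degree v2 = 5)
    (hdw : G.degree w = 6)
    (S : Set V) (hS : S = {v1, v2, w})
    (hrec : ∃ (m : ℕ) (φ : Fin (m + 1) → ↥(Sᶜ) → ℕ),
      IsRecolSeq (G.induce Sᶜ) (fun u => L u.1) φ (fun u => α u.1) (fun u => β u.1) ∧
      ∀ u : ↥(Sᶜ), recolorCount φ u ≤ k) :
    ∃ (M : ℕ) (ψ : Fin (M + 1) → V → ℕ),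
      IsRecolSeq G L ψ α β ∧ ∀ u : V, recolorCount ψ u ≤ k := by
  have n12 : v1 ≠ v2 := he1.ne
  have n1w : v1 ≠ w := he2.ne
  have n2w : v2 ≠ w := he3.ne
  obtain ⟨m, φ, ⟨hφ0, hφl, hφc, hφs⟩, hcount⟩ := hrec
  have hokα : ∀ T, Recol.Ok G L T α := fun T => ⟨fun v _ => hα.1 v, fun u v _ _ h => hα.2 h⟩
  have hokβ : ∀ T, Recol.Ok G L T β := fun T => ⟨fun v _ => hβ.1 v, fun u v _ _ h => hβ.2 h⟩
  have hST : ∀ v, v ∈ ({v1, v2, w} : Finset V) ↔ v ∈ S := by intro v; rw [hS]; simp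
  -- stage 0: the given sequence as a list of moves
  obtain ⟨ms0, a1, a2, a3, a4⟩ := Recol.ofSeq (G := G) (L := L) S {v1, v2, w} hST m φ α
    (fun u => by rw [hφ0]) hφc hφs
  have a2' : ∀ u, u ∉ ({v1, v2, w} : Finset V) → Recol.run α ms0 u = β u := by
    intro u hu
    rw [hST] at hu
    have := a2 ⟨u, hu⟩
    rw [hφl] at this
    exact this
  have a3' : ∀ u, u ∉ ({v1, v2, w} : Finset V) → Recol.cnt u ms0 ≤ k := by
    intro u hu
    rw [hST] at hu
    exact (a3 ⟨u, hu⟩).trans (hcount _)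
  -- neighbourhood sizes
  have cw : ((G.neighborFinset w).filter (· ∉ ({v1, v2} : Finset V))).card = 4 := by
    have e : (G.neighborFinset w).filter (· ∉ ({v1, v2} : Finset V))
        = G.neighborFinset w \ {v1, v2} := by ext; simp
    rw [e, Finset.card_sdiff_of_subset (by
      intro y hy
      simp only [Finset.mem_insert, Finset.mem_singleton] at hy
      rcases hy with rfl | rfl
      · simpa using he2.symm
      · simpa using he3.symm), SimpleGraph.card_neighborFinset_eq_degree, hdw,
      Finset.card_pair n12]
  have cw' : ((G.neighborFinset w).filter (· ∉ ({v1, v2, w} : Finset V))).card ≤ 4 := by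
    rw [← cw]
    apply Finset.card_le_card
    intro y hy
    simp only [Finset.mem_filter, Finset.mem_insert, Finset.mem_singleton] at hy ⊢
    tauto
  -- stage 1: insert `w`
  obtain ⟨ms1, b1, b2, b3, b4, b5⟩ := Recol.extend (G := G) (L := L) {v1, v2} {v1, v2, w}
    (by intro y; simp only [Finset.mem_insert, Finset.mem_singleton]; tauto) (fun _ => 5) (by
      intro x hx hx'
      have : x = w := by
        simp only [Finset.mem_insert, Finset.mem_singleton] at hx hx'; tauto
      subst this
      rw [cw, hL]; omega) ms0 α a4 a1 (hokα _)
  have hwT : w ∉ ({v1, v2} : Finset V) := by simp [n1w.symm, n2w.symm]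
  have lenw : (Recol.ev G w ms0).length ≤ 4 * k := by
    refine (Recol.ev_length {v1, v2, w} w ms0 a4).trans ?_
    refine (Finset.sum_le_card_nsmul _ _ k fun u hu => a3' u (Finset.mem_filter.1 hu).2).trans ?_
    rw [smul_eq_mul]
    exact Nat.mul_le_mul_right _ cw'
  have cntw : 5 * Recol.cnt w ms1 ≤ 4 * k + 4 := by
    have := b5 w (by simp) hwT
    omega
  -- recolour `w` to its final colour
  have e1 : ∀ u, u ∉ ({v1, v2} : Finset V) → Function.update (Recol.run α ms1) w (β w) u = β u := by
    intro u hu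
    by_cases e : u = w
    · subst e; simp
    · have hu' : u ∉ ({v1, v2, w} : Finset V) := by
        simp only [Finset.mem_insert, Finset.mem_singleton] at hu ⊢; tauto
      rw [Function.update_of_ne e, b2 u hu', a2' u hu']
  obtain ⟨ms2, hms2⟩ : ∃ ms2, ms2 = ms1 ++ [(w, β w)] := ⟨_, rfl⟩
  have c1 : Recol.Valid G L {v1, v2} α ms2 := by
    rw [hms2]
    exact b1.append ⟨b1.last, (hokβ _).congr e1⟩
  have c2 : ∀ u, u ∉ ({v1, v2} : Finset V) → Recol.run α ms2 u = β u := by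
    rw [hms2, Recol.run_append]; exact e1
  have c3 : ∀ m ∈ ms2, m.1 ∉ ({v1, v2} : Finset V) := by
    intro m hm
    rw [hms2, List.mem_append, List.mem_singleton] at hm
    rcases hm with hm | rfl
    · exact b4 m hm
    · exact hwT
  have c4 : Recol.cnt w ms2 = Recol.cnt w ms1 + 1 := by
    rw [hms2, Recol.cnt_append]; simp [Recol.cnt]
  have c5 : ∀ u, u ∉ ({v1, v2, w} : Finset V) → Recol.cnt u ms2 ≤ k := by
    intro u hu
    have hne : w ≠ u := by rintro rfl; simp at hu
    have := b3 u hu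
    have := a3' u hu
    rw [hms2, Recol.cnt_append]
    simp only [Recol.cnt] at *
    simp only [List.countP_cons, List.countP_nil, hne]
    simp
    omega
  -- stage 2: insert `v1` and `v2`
  have lenv : ∀ x y, G.Adj x y → G.Adj x w → x ≠ y → y ≠ w → x ≠ w → G.degree x = 5 →
      ({v1, v2} : Finset V) = {x, y} →
      (Recol.ev G x ms2).length ≤ 3 * k + Recol.cnt w ms2 := by
    intro x y hxy hxw nxy nyw nxw hd hset
    refine (Recol.ev_length {v1, v2} x ms2 c3).trans ?_
    have hN : (G.neighborFinset x).filter (· ∉ ({v1, v2} : Finset V)) =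
        insert w (G.neighborFinset x \ {y, w}) := by
      ext z
      rw [hset]
      simp only [Finset.mem_filter, Finset.mem_insert, Finset.mem_singleton, Finset.mem_sdiff,
        SimpleGraph.mem_neighborFinset]
      constructor
      · tauto
      · rintro (rfl | ⟨h1, h2⟩)
        · exact ⟨hxw, by rintro (h | h); exacts [nxw h.symm, nyw h.symm]⟩
        · refine ⟨h1, ?_⟩
          rintro (h | h)
          · exact h1.ne h.symm
          · exact h2 (Or.inl h)
    rw [hN, Finset.sum_insert (by simp)]
    have hc : (G.neighborFinset x \ {y, w}).card = 3 := by
      rw [Finset.card_sdiff_of_subset (by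
        intro z hz
        simp only [Finset.mem_insert, Finset.mem_singleton] at hz
        rcases hz with rfl | rfl
        · simpa using hxy
        · simpa using hxw), SimpleGraph.card_neighborFinset_eq_degree, hd,
        Finset.card_pair nyw]
    have := Finset.sum_le_card_nsmul (G.neighborFinset x \ {y, w}) (fun u => Recol.cnt u ms2) k
      (by
        intro u hu
        apply c5
        have e : ({v1, v2, w} : Finset V) = insert x {y, w} := by
          ext z
          have := Finset.ext_iff.1 hset z
          simp only [Finset.mem_insert, Finset.mem_singleton] at this ⊢
          rw [← or_assoc, this, or_assoc]
        rw [e]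
        rw [Finset.mem_sdiff, SimpleGraph.mem_neighborFinset] at hu
        rw [Finset.mem_insert]
        rintro (h | h)
        · exact hu.1.ne h.symm
        · exact hu.2 h)
    rw [hc, smul_eq_mul] at this
    omega
  obtain ⟨ms3, d1, d2, d3, d4, d5⟩ := Recol.extend (G := G) (L := L) ∅ {v1, v2}
    (by simp) (fun _ => 4) (by
      intro x hx _
      refine ⟨by omega, ?_⟩
      have : ((G.neighborFinset x).filter (· ∉ (∅ : Finset V))).card = 5 := by
        simp only [Finset.notMem_empty, not_false_eq_true, Finset.filter_true]
        rw [SimpleGraph.card_neighborFinset_eq_degree]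
        simp only [Finset.mem_insert, Finset.mem_singleton] at hx
        rcases hx with rfl | rfl <;> assumption
      rw [this, hL x]) ms2 α c3 c1 (hokα _)
  have l1 := lenv v1 v2 he1 he2 n12 n2w n1w hdv1 rfl
  have l2 := lenv v2 v1 he1.symm he3 n12.symm n1w n2w hdv2 (Finset.pair_comm _ _)
  have f1 := d5 v1 (by simp) (by simp)
  have f2 := d5 v2 (by simp) (by simp)
  -- last phase
  obtain ⟨ms4, g1, g2, g3, g4, g5⟩ := Recol.finish (G := G) (L := L) (Recol.run α ms3) β d1.last
    (hokβ _) v1 v2 he1 (by rw [SimpleGraph.card_neighborFinset_eq_degree, hdv1, hL]; omega) (by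
      intro u h1 h2
      have hu : u ∉ ({v1, v2} : Finset V) := by simp [h1, h2]
      rw [d2 u hu, c2 u hu])
  obtain ⟨M, ψ, q1, q2⟩ := Recol.toSeq (G := G) (L := L) (ms3 ++ ms4) α (d1.append g1)
  rw [Recol.run_append, g2] at q1
  refine ⟨M, ψ, q1, fun u => (q2 u).trans ?_⟩
  rw [Recol.cnt_append]
  by_cases h1 : u = v1
  · subst h1; omega
  by_cases h2 : u = v2
  · subst h2; omega
  rw [g3 u h1 h2, d3 u (by simp [h1, h2])]
  by_cases h3 : u = w
  · subst h3; omega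
  · have := c5 u (by simp [h1, h2, h3])
    omega
end
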